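/- arXiv:1512.00427 — 2 statements merged into one kernel-verified Lean document; each statement's English description precedes it below -/
import Mathlib

section
/- Let r ≥ 3 be an odd integer, let p = 2m+1 > 10 be a prime, set t = (r+1)/2 and n = r(2m+1) + t. Let T be a tree with m+1 edges that has a leaf z such that the tree T − z (T with the leaf z and its incident edge deleted) has at least 2m/5 leaves. Then T decomposes K_n \ K_t, the complete graph on n vertices minus the edges of a complete graph on some fixed set of t of its vertices. -/
/-- `H` decomposes `G`: `G` is the edge-disjoint union of isomorphic copies of `H`,
each copy being given by an injective homomorphism of `H` into `G`, and every edge of `G`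
lying in exactly one copy. -/
def Decomposes {α β : Type} (H : SimpleGraph α) (G : SimpleGraph β) : Prop :=
  ∃ (ι : Type) (f : ι → α → β),
    (∀ i, Function.Injective (f i)) ∧
    (∀ i a b, H.Adj a b → G.Adj (f i a) (f i b)) ∧
    (∀ e ∈ G.edgeSet, ∃! q : ι × Sym2 α, q.2 ∈ H.edgeSet ∧ Sym2.map (f q.1) q.2 = e)

open MvPolynomial in
theorem coeff_det_vandermonde_sq_mul_self {R : Type*} [CommRing R] (l : ℕ)
    (t : Fin l →₀ ℕ) (ht : ∀ i, t i = 2 * (l - 1)) :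
    coeff t ((Matrix.vandermonde fun i : Fin l ↦ (X i ^ 2 : MvPolynomial (Fin l) R)).det *
      (Matrix.vandermonde fun i : Fin l ↦ (X i ^ 2 : MvPolynomial (Fin l) R)).det) =
      ((Equiv.Perm.sign (Fin.revPerm : Equiv.Perm (Fin l)) : ℤ) : R) * (l.factorial : R) := by
  have hdet : (Matrix.vandermonde fun i : Fin l ↦ (X i ^ 2 : MvPolynomial (Fin l) R)).det =
      ∑ σ : Equiv.Perm (Fin l),
        monomial (Finsupp.equivFunOnFinite.symm fun i ↦ 2 * (σ i : ℕ))
          ((Equiv.Perm.sign σ : ℤ) : R) := by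
    rw [← Matrix.det_transpose, Matrix.det_apply']
    refine Finset.sum_congr rfl fun σ _ ↦ ?_
    rw [monomial_eq, Finsupp.prod_fintype _ _ (by simp)]
    simp [Matrix.vandermonde_apply, ← pow_mul]
  rw [hdet, Finset.sum_mul_sum, coeff_sum]
  have key : ∀ σ : Equiv.Perm (Fin l),
      coeff t (∑ τ : Equiv.Perm (Fin l),
        monomial (Finsupp.equivFunOnFinite.symm fun i ↦ 2 * (σ i : ℕ))
          ((Equiv.Perm.sign σ : ℤ) : R) *
        monomial (Finsupp.equivFunOnFinite.symm fun i ↦ 2 * (τ i : ℕ))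
          ((Equiv.Perm.sign τ : ℤ) : R)) =
      ((Equiv.Perm.sign (Fin.revPerm : Equiv.Perm (Fin l)) : ℤ) : R) := by
    intro σ
    rw [coeff_sum, Finset.sum_eq_single (Fin.revPerm * σ)]
    · rw [monomial_mul, coeff_monomial, if_pos]
      · rw [Equiv.Perm.sign_mul]
        have : ((Equiv.Perm.sign σ : ℤ) : R) * ((Equiv.Perm.sign σ : ℤ) : R) = 1 := by
          rw [← Int.cast_mul, ← Units.val_mul, Int.units_mul_self]; simp
        push_cast
        linear_combination
          ((Equiv.Perm.sign (Fin.revPerm : Equiv.Perm (Fin l)) : ℤ) : R) * this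
      · ext i
        have := (σ i).isLt
        simp [ht, Fin.val_rev]
        omega
    · intro τ _ hτ
      rw [monomial_mul, coeff_monomial, if_neg]
      intro h
      apply hτ
      ext i
      have h1 := DFunLike.congr_fun h i
      simp only [Finsupp.coe_add, Pi.add_apply, Finsupp.equivFunOnFinite_symm_apply_apply,
        ht] at h1
      have := (σ i).isLt
      simp [Fin.val_rev]
      omega
    · simp
  rw [Finset.sum_congr rfl fun σ _ ↦ key σ]
  simp [Fintype.card_perm, mul_comm]

open MvPolynomial in
/-- `Q` is the leading form of `P` in degree `d`. -/
def IsLeadingForm {σ R : Type*} [CommRing R] (P Q : MvPolynomial σ R) (d : ℕ) : Prop :=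
  Q.IsHomogeneous d ∧ (P - Q = 0 ∨ (P - Q).totalDegree < d)

namespace IsLeadingForm

open MvPolynomial

variable {σ R : Type*} [CommRing R] {P P' Q Q' : MvPolynomial σ R} {d d' : ℕ}

theorem totalDegree_le (h : IsLeadingForm P Q d) : P.totalDegree ≤ d := by
  have h1 := h.1.totalDegree_le
  rcases h.2 with h2 | h2
  · rwa [sub_eq_zero.1 h2]
  · calc P.totalDegree = (P - Q + Q).totalDegree := by rw [sub_add_cancel]
      _ ≤ max (P - Q).totalDegree Q.totalDegree := totalDegree_add _ _
      _ ≤ d := max_le h2.le h1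

theorem coeff_eq (h : IsLeadingForm P Q d) {t : σ →₀ ℕ} (ht : t.degree = d) :
    coeff t P = coeff t Q := by
  rcases h.2 with h2 | h2
  · rw [sub_eq_zero.1 h2]
  · have := coeff_eq_zero_of_totalDegree_lt (f := P - Q) (d := t) (by
      rw [← Finsupp.degree_apply, ht]; exact h2)
    rwa [coeff_sub, sub_eq_zero] at this

theorem refl (h : Q.IsHomogeneous d) : IsLeadingForm Q Q d := ⟨h, Or.inl (sub_self _)⟩

theorem mul (h : IsLeadingForm P Q d) (h' : IsLeadingForm P' Q' d') :
    IsLeadingForm (P * P') (Q * Q') (d + d') := by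
  refine ⟨h.1.mul h'.1, ?_⟩
  have e : P * P' - Q * Q' = P * (P' - Q') + (P - Q) * Q' := by ring
  rw [e]
  have hP := h.totalDegree_le
  have hQ' := h'.1.totalDegree_le
  have m1 := totalDegree_mul P (P' - Q')
  have m2 := totalDegree_mul (P - Q) Q'
  have m3 := totalDegree_add (P * (P' - Q')) ((P - Q) * Q')
  rcases h.2 with h2 | h2 <;> rcases h'.2 with h2' | h2'
  · simp [h2, h2']
  · right
    simp only [h2, zero_mul, add_zero]
    omega
  · right
    simp only [h2', mul_zero, zero_add]
    omega
  · right
    refine m3.trans_lt (max_lt ?_ ?_) <;> omega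

theorem prod {ι : Type*} (s : Finset ι) {P Q : ι → MvPolynomial σ R} {d : ι → ℕ}
    (h : ∀ i ∈ s, IsLeadingForm (P i) (Q i) (d i)) :
    IsLeadingForm (∏ i ∈ s, P i) (∏ i ∈ s, Q i) (∑ i ∈ s, d i) := by
  classical
  induction s using Finset.induction_on with
  | empty => simpa using refl (isHomogeneous_one σ R)
  | insert a s ha ih =>
    rw [Finset.prod_insert ha, Finset.prod_insert ha, Finset.sum_insert ha]
    exact (h a (Finset.mem_insert_self a s)).mul
      (ih fun i hi ↦ h i (Finset.mem_insert_of_mem hi))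

end IsLeadingForm

open MvPolynomial in
theorem exists_sq_injective_add_injective {K : Type*} [Field K] (l : ℕ)
    (hl : (l.factorial : K) ≠ 0) (a : Fin l → K) (S : Finset K) (hS : 2 * l ≤ S.card) :
    ∃ x : Fin l → K, (∀ i, x i ∈ S) ∧ Function.Injective (fun i ↦ x i ^ 2) ∧
      Function.Injective (fun i ↦ a i + x i) := by
  set F : Fin l → Fin l → MvPolynomial (Fin l) K := fun i j ↦
    (X j ^ 2 - X i ^ 2) * ((X j - X i + C (a j - a i)) * (X j + X i)) with hF
  set G : Fin l → Fin l → MvPolynomial (Fin l) K := fun i j ↦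
    (X j ^ 2 - X i ^ 2) * ((X j - X i) * (X j + X i)) with hG
  set P := ∏ i, ∏ j ∈ Finset.Ioi i, F i j with hP
  set t : Fin l →₀ ℕ := Finsupp.equivFunOnFinite.symm fun _ ↦ 2 * (l - 1) with ht
  have hFG : ∀ i j, IsLeadingForm (F i j) (G i j) 4 := by
    intro i j
    have hX : ∀ i : Fin l, (X i : MvPolynomial (Fin l) K).IsHomogeneous 1 := isHomogeneous_X K
    refine (IsLeadingForm.refl (d := 2) (((hX j).pow 2).sub ((hX i).pow 2))).mul
      (d' := 2) (IsLeadingForm.mul (d := 1) (d' := 1) ⟨(hX j).sub (hX i), ?_⟩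
        (IsLeadingForm.refl ((hX j).add (hX i))))
    right
    rw [add_sub_cancel_left, totalDegree_C]
    exact one_pos
  have hlead : IsLeadingForm P (∏ i, ∏ j ∈ Finset.Ioi i, G i j)
      (∑ i : Fin l, ∑ j ∈ Finset.Ioi i, 4) :=
    IsLeadingForm.prod _ fun i _ ↦ IsLeadingForm.prod _ fun j _ ↦ hFG i j
  have hdeg : t.degree = ∑ i : Fin l, ∑ j ∈ Finset.Ioi i, 4 := by
    have h1 : ∀ n : ℕ, ∑ i ∈ Finset.range n, (n - 1 - i) * 4 = n * (2 * (n - 1)) := by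
      intro n
      rw [Finset.sum_range_reflect (fun i ↦ i * 4) n, ← Finset.sum_mul]
      have := Finset.sum_range_id_mul_two n
      rw [show (4 : ℕ) = 2 * 2 from rfl, ← mul_assoc, this]
      ring
    have h2 : t.degree = l * (2 * (l - 1)) := by
      simp [Finsupp.degree_eq_sum, ht]
    rw [h2, ← h1 l, Finset.sum_range]
    simp [Fin.card_Ioi]
  have hcoeff : coeff t P ≠ 0 := by
    rw [hlead.coeff_eq hdeg]
    have e : ∏ i, ∏ j ∈ Finset.Ioi i, G i j =
        (Matrix.vandermonde fun i : Fin l ↦ (X i ^ 2 : MvPolynomial (Fin l) K)).det *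
        (Matrix.vandermonde fun i : Fin l ↦ (X i ^ 2 : MvPolynomial (Fin l) K)).det := by
      rw [Matrix.det_vandermonde, ← Finset.prod_mul_distrib]
      refine Finset.prod_congr rfl fun i _ ↦ ?_
      rw [← Finset.prod_mul_distrib]
      refine Finset.prod_congr rfl fun j _ ↦ ?_
      simp only [hG]
      ring
    rw [e, coeff_det_vandermonde_sq_mul_self l t (by simp [ht])]
    refine mul_ne_zero ?_ hl
    rcases Int.units_eq_one_or (Equiv.Perm.sign (Fin.revPerm : Equiv.Perm (Fin l))) with h | h <;>
      simp [h]
  have htot : P.totalDegree = t.degree := by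
    refine le_antisymm (hdeg ▸ hlead.totalDegree_le) ?_
    rw [Finsupp.degree_apply]
    exact le_totalDegree (mem_support_iff.2 hcoeff)
  obtain ⟨x, hxS, hx⟩ := combinatorial_nullstellensatz_exists_eval_nonzero P t hcoeff htot
    (fun _ ↦ S) (fun i ↦ by
      have := i.isLt
      simp only [ht, Finsupp.equivFunOnFinite_symm_apply_apply]
      omega)
  have hne : ∀ i j, i < j → x i ^ 2 ≠ x j ^ 2 ∧ a i + x i ≠ a j + x j := by
    intro i j hij
    simp only [hP, map_prod, Finset.prod_ne_zero_iff] at hx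
    have := hx i (Finset.mem_univ _) j (Finset.mem_Ioi.2 hij)
    simp only [hF, map_mul, map_sub, map_add, map_pow, eval_X, eval_C, mul_ne_zero_iff] at this
    refine ⟨fun h ↦ this.1 (by rw [h, sub_self]), fun h ↦ this.2.1 ?_⟩
    linear_combination -h
  refine ⟨x, hxS, fun i j h ↦ ?_, fun i j h ↦ ?_⟩ <;>
    rcases lt_trichotomy i j with hij | hij | hij
  · exact ((hne i j hij).1 h).elim
  · exact hij
  · exact ((hne j i hij).1 h.symm).elim
  · exact ((hne i j hij).2 h).elim
  · exact hij
  · exact ((hne j i hij).2 h.symm).elim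

/-- A graph, given by the sources and targets of its edges, in which every nonempty set of `k`
vertices spans fewer than `2 * k` edges is properly colourable with four colours. -/
theorem exists_coloring_of_sparse {X E : Type*} [Fintype X] [DecidableEq X] [Fintype E]
    (src tgt : E → X) (hne : ∀ e, src e ≠ tgt e)
    (hsparse : ∀ s : Finset X, s.Nonempty →
      (Finset.univ.filter fun e ↦ src e ∈ s ∧ tgt e ∈ s).card < 2 * s.card) :
    ∃ c : X → Fin 4, ∀ e, c (src e) ≠ c (tgt e) := by
  classical
  suffices H : ∀ (n : ℕ) (s : Finset X), s.card = n →
      ∃ c : X → Fin 4, ∀ e, src e ∈ s → tgt e ∈ s → c (src e) ≠ c (tgt e) by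
    obtain ⟨c, hc⟩ := H _ Finset.univ rfl
    exact ⟨c, fun e ↦ hc e (Finset.mem_univ _) (Finset.mem_univ _)⟩
  intro n
  induction n with
  | zero =>
    intro s hs
    rw [Finset.card_eq_zero] at hs
    subst hs
    exact ⟨fun _ ↦ 0, by simp⟩
  | succ n ih =>
    intro s hs
    have hsne : s.Nonempty := Finset.card_pos.1 (by omega)
    set A := Finset.univ.filter fun e ↦ src e ∈ s ∧ tgt e ∈ s with hA
    have hlt := hsparse s hsne
    obtain ⟨x, hx, hxdeg⟩ : ∃ x ∈ s, (A.filter fun e ↦ src e = x).card +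
        (A.filter fun e ↦ tgt e = x).card < 4 := by
      by_contra! hcon
      have h1 : A.card = ∑ x ∈ s, (A.filter fun e ↦ src e = x).card :=
        Finset.card_eq_sum_card_fiberwise fun e he ↦ by simp_all
      have h2 : A.card = ∑ x ∈ s, (A.filter fun e ↦ tgt e = x).card :=
        Finset.card_eq_sum_card_fiberwise fun e he ↦ by simp_all
      have h3 := Finset.card_nsmul_le_sum s _ 4 hcon
      rw [Finset.sum_add_distrib, smul_eq_mul] at h3
      rw [← hA] at hlt
      omega
    obtain ⟨c, hc⟩ := ih (s.erase x) (by rw [Finset.card_erase_of_mem hx]; omega)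
    set B : Finset (Fin 4) := (A.filter fun e ↦ src e = x).image (fun e ↦ c (tgt e)) ∪
      (A.filter fun e ↦ tgt e = x).image (fun e ↦ c (src e)) with hB
    have hBcard : B.card < (Finset.univ : Finset (Fin 4)).card := by
      refine lt_of_le_of_lt ((Finset.card_union_le _ _).trans
        (add_le_add Finset.card_image_le Finset.card_image_le)) ?_
      simpa using hxdeg
    obtain ⟨k, -, hk⟩ := Finset.exists_mem_notMem_of_card_lt_card hBcard
    refine ⟨Function.update c x k, fun e h1 h2 ↦ ?_⟩
    have heA : e ∈ A := by simp [hA, h1, h2]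
    by_cases hs1 : src e = x
    · have ht : tgt e ≠ x := fun h ↦ hne e (hs1.trans h.symm)
      rw [hs1, Function.update_self, Function.update_of_ne ht]
      intro h
      refine hk (Finset.mem_union_left _ (Finset.mem_image.2 ⟨e, ?_, h.symm⟩))
      simp [heA, hs1]
    · rw [Function.update_of_ne hs1]
      by_cases ht : tgt e = x
      · rw [ht, Function.update_self]
        intro h
        refine hk (Finset.mem_union_right _ (Finset.mem_image.2 ⟨e, ?_, h⟩))
        simp [heA, ht]
      · rw [Function.update_of_ne ht]
        exact hc e (Finset.mem_erase.2 ⟨hs1, h1⟩) (Finset.mem_erase.2 ⟨ht, h2⟩)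

/-- The vertices of a rooted tree, given by its parent map, can be labelled injectively by a
finite abelian group so that the differences along edges are pairwise distinct up to sign, as soon
as the group has roughly three times as many elements as the tree has vertices. -/
theorem exists_injOn_rainbow {U A : Type*} [DecidableEq U] [AddCommGroup A] [Fintype A]
    (par : U → U) (h : U → ℕ) (ρ : U) (hpar : ∀ v, v ≠ ρ → h (par v) < h v)
    (s : Finset U) (hρ : ρ ∈ s) (hs : ∀ v ∈ s, v ≠ ρ → par v ∈ s)
    (hcard : 3 * s.card ≤ Fintype.card A + 4) :
    ∃ f : U → A, Set.InjOn f s ∧ ∀ u ∈ s, u ≠ ρ → ∀ v ∈ s, v ≠ ρ →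
      (f u - f (par u) = f v - f (par v) ∨ f u - f (par u) = -(f v - f (par v))) → u = v := by
  classical
  suffices H : ∀ (n : ℕ) (s : Finset U), s.card = n → ρ ∈ s → (∀ v ∈ s, v ≠ ρ → par v ∈ s) →
      3 * s.card ≤ Fintype.card A + 4 → ∃ f : U → A, Set.InjOn f s ∧
      ∀ u ∈ s, u ≠ ρ → ∀ v ∈ s, v ≠ ρ →
      (f u - f (par u) = f v - f (par v) ∨ f u - f (par u) = -(f v - f (par v))) → u = v from
    H _ s rfl hρ hs hcard
  intro n
  induction n with
  | zero =>
    intro s h0 hρ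
    rw [Finset.card_eq_zero] at h0
    simp [h0] at hρ
  | succ n ih =>
    intro s hn hρ hs hcard
    by_cases hone : s = {ρ}
    · refine ⟨fun _ ↦ 0, by simp [hone], fun u hu hu' ↦ ?_⟩
      rw [hone, Finset.mem_singleton] at hu
      exact (hu' hu).elim
    have hne : (s.erase ρ).Nonempty := by
      rw [Finset.nonempty_iff_ne_empty]
      intro he
      rw [Finset.erase_eq_empty_iff] at he
      rcases he with he | he
      · simp [he] at hρ
      · exact hone he
    obtain ⟨w, hw, hmax⟩ := Finset.exists_max_image (s.erase ρ) h hne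
    rw [Finset.mem_erase] at hw
    obtain ⟨hwρ, hws⟩ := hw
    set s' := s.erase w with hs'
    have hs'card : s'.card = n := by rw [Finset.card_erase_of_mem hws]; omega
    have hρ' : ρ ∈ s' := Finset.mem_erase.2 ⟨hwρ.symm, hρ⟩
    have hparw : ∀ v ∈ s, v ≠ ρ → par v ∈ s' := by
      intro v hv hvρ
      refine Finset.mem_erase.2 ⟨fun e ↦ ?_, hs v hv hvρ⟩
      have h1 := hpar v hvρ
      have h2 := hmax v (Finset.mem_erase.2 ⟨hvρ, hv⟩)
      rw [e] at h1
      omega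
    obtain ⟨f, hinj, hrain⟩ := ih s' hs'card hρ'
      (fun v hv hvρ ↦ hparw v (Finset.mem_of_mem_erase hv) hvρ) (by omega)
    set d : U → A := fun u ↦ f u - f (par u) with hd
    set B : Finset A := s'.image f ∪ ((s'.erase ρ).image (fun u ↦ f (par w) + d u) ∪
      (s'.erase ρ).image (fun u ↦ f (par w) - d u)) with hB
    have hBcard : B.card < (Finset.univ : Finset A).card := by
      have c1 : (s'.image f).card ≤ s'.card := Finset.card_image_le
      have c2 : ((s'.erase ρ).image (fun u ↦ f (par w) + d u)).card ≤ (s'.erase ρ).card :=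
        Finset.card_image_le
      have c3 : ((s'.erase ρ).image (fun u ↦ f (par w) - d u)).card ≤ (s'.erase ρ).card :=
        Finset.card_image_le
      have c4 := Finset.card_union_le (s'.image f)
        ((s'.erase ρ).image (fun u ↦ f (par w) + d u) ∪
          (s'.erase ρ).image (fun u ↦ f (par w) - d u))
      have c5 := Finset.card_union_le ((s'.erase ρ).image (fun u ↦ f (par w) + d u))
        ((s'.erase ρ).image (fun u ↦ f (par w) - d u))
      have c6 := Finset.card_erase_of_mem hρ'
      have c7 : 0 < s'.card := Finset.card_pos.2 ⟨ρ, hρ'⟩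
      rw [← hB] at c4
      rw [Finset.card_univ]
      omega
    obtain ⟨k, -, hk⟩ := Finset.exists_mem_notMem_of_card_lt_card hBcard
    simp only [hB, Finset.mem_union, Finset.mem_image, not_or, not_exists, not_and] at hk
    obtain ⟨hk1, hk2, hk3⟩ := hk
    have hupd : ∀ u ∈ s', Function.update f w k u = f u := fun u hu ↦
      Function.update_of_ne (Finset.ne_of_mem_erase hu) _ _
    have hdiff : ∀ u ∈ s', u ≠ ρ →
        Function.update f w k u - Function.update f w k (par u) = d u := by
      intro u hu huρ
      rw [hupd u hu, hupd _ (hparw u (Finset.mem_of_mem_erase hu) huρ)]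
    have hdiffw : Function.update f w k w - Function.update f w k (par w) = k - f (par w) := by
      rw [Function.update_self, hupd _ (hparw w hws hwρ)]
    have hmem : ∀ u ∈ s, u = w ∨ u ∈ s' := by
      intro u hu
      by_cases huw : u = w
      · exact Or.inl huw
      · exact Or.inr (Finset.mem_erase.2 ⟨huw, hu⟩)
    refine ⟨Function.update f w k, ?_, ?_⟩
    · intro u hu v hv huv
      rcases hmem u hu with rfl | hu' <;> rcases hmem v hv with rfl | hv'
      · rfl
      · rw [Function.update_self, hupd v hv'] at huv
        exact (hk1 v hv' huv.symm).elim
      · rw [Function.update_self, hupd u hu'] at huv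
        exact (hk1 u hu' huv).elim
      · rw [hupd u hu', hupd v hv'] at huv
        exact hinj hu' hv' huv
    · intro u hu huρ v hv hvρ huv
      rcases hmem u hu with rfl | hu' <;> rcases hmem v hv with rfl | hv'
      · rfl
      · rw [hdiffw, hdiff v hv' hvρ] at huv
        rcases huv with e | e
        · exact (hk2 v (Finset.mem_erase.2 ⟨hvρ, hv'⟩) (by rw [← e]; abel)).elim
        · refine (hk3 v (Finset.mem_erase.2 ⟨hvρ, hv'⟩) ?_).elim
          rw [sub_eq_add_neg, ← e]; abel
      · rw [hdiffw, hdiff u hu' huρ] at huv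
        rcases huv with e | e
        · exact (hk2 u (Finset.mem_erase.2 ⟨huρ, hu'⟩) (by rw [e]; abel)).elim
        · exact (hk3 u (Finset.mem_erase.2 ⟨huρ, hu'⟩) (by rw [e]; abel)).elim
      · rw [hdiff u hu' huρ, hdiff v hv' hvρ] at huv
        exact hrain u hu' huρ v hv' hvρ huv

/-- A rooted tree with `m` edges and sufficiently many leaves has a labelling by `ZMod (2 * m + 1)`
whose differences along edges are pairwise distinct up to sign, and which is injective both on the
chosen leaves and on the remaining vertices. -/
theorem exists_rainbow_of_leaves {U : Type*} [Fintype U] [DecidableEq U] {m p : ℕ} [Fact p.Prime]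
    (hpm : p = 2 * m + 1) (par : U → U) (h : U → ℕ) (ρ : U)
    (hpar : ∀ v, v ≠ ρ → h (par v) < h v) (hU : Fintype.card U = m + 1) (Λ : Finset U)
    (hρ : ρ ∉ Λ) (hΛ : ∀ v, v ≠ ρ → par v ∉ Λ) (hcard : 2 * m ≤ 5 * (Λ.card + 1)) :
    ∃ f : U → ZMod p, Set.InjOn f Λ ∧ Set.InjOn f (Λᶜ : Finset U) ∧
      (∀ v, v ≠ ρ → f v ≠ f (par v)) ∧ ∀ u, u ≠ ρ → ∀ v, v ≠ ρ →
      (f u - f (par u) = f v - f (par v) ∨ f u - f (par u) = -(f v - f (par v))) → u = v := by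
  classical
  have hccard : (Λᶜ : Finset U).card + Λ.card = m + 1 := by
    rw [← hU, Finset.card_compl_add_card]
  have hρ' : ρ ∈ (Λᶜ : Finset U) := by simpa using hρ
  have hΛ' : ∀ v, v ≠ ρ → par v ∈ (Λᶜ : Finset U) := by simpa using hΛ
  obtain ⟨g, hginj, hgrain⟩ := exists_injOn_rainbow (A := ZMod p) par h ρ hpar Λᶜ hρ'
    (fun v _ hv ↦ hΛ' v hv) (by rw [ZMod.card]; omega)
  set d : U → ZMod p := fun u ↦ g u - g (par u) with hd
  set B : Finset (ZMod p) := insert 0 ((Λᶜ.erase ρ).image d ∪ (Λᶜ.erase ρ).image (fun u ↦ -d u))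
    with hB
  have hBcard : B.card ≤ 1 + 2 * (m - Λ.card) := by
    have c1 : ((Λᶜ.erase ρ).image d).card ≤ (Λᶜ.erase ρ).card := Finset.card_image_le
    have c2 : ((Λᶜ.erase ρ).image (fun u ↦ -d u)).card ≤ (Λᶜ.erase ρ).card :=
      Finset.card_image_le
    have c3 := Finset.card_union_le ((Λᶜ.erase ρ).image d) ((Λᶜ.erase ρ).image (fun u ↦ -d u))
    have c4 := Finset.card_insert_le 0
      ((Λᶜ.erase ρ).image d ∪ (Λᶜ.erase ρ).image (fun u ↦ -d u))
    have c5 := Finset.card_erase_of_mem hρ'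
    rw [← hB] at c4
    omega
  have hpos : 0 < (Λᶜ : Finset U).card := Finset.card_pos.2 ⟨ρ, hρ'⟩
  have hScard : 2 * Λ.card ≤ (Bᶜ : Finset (ZMod p)).card := by
    rw [Finset.card_compl, ZMod.card]
    omega
  have hfact : ((Λ.card.factorial : ℕ) : ZMod p) ≠ 0 := by
    rw [Ne, ZMod.natCast_eq_zero_iff, (Fact.out : p.Prime).dvd_factorial]
    omega
  obtain ⟨x, hxS, hxsq, hxadd⟩ := exists_sq_injective_add_injective Λ.card hfact
    (fun i ↦ g (par (Λ.equivFin.symm i))) Bᶜ hScard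
  set y : Λ → ZMod p := fun v ↦ x (Λ.equivFin v) with hy
  have hyS : ∀ v : Λ, y v ∉ B := fun v ↦ by simpa using hxS (Λ.equivFin v)
  have hysq : ∀ u v : Λ, (y u = y v ∨ y u = -y v) → u = v := by
    intro u v huv
    refine Λ.equivFin.injective (hxsq ?_)
    exact sq_eq_sq_iff_eq_or_eq_neg.2 huv
  have hyadd : ∀ u v : Λ, g (par u) + y u = g (par v) + y v → u = v := by
    intro u v huv
    refine Λ.equivFin.injective (hxadd ?_)
    simpa using huv
  set f : U → ZMod p := fun v ↦ if hv : v ∈ Λ then g (par v) + y ⟨v, hv⟩ else g v with hf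
  have hfΛ : ∀ v (hv : v ∈ Λ), f v = g (par v) + y ⟨v, hv⟩ := fun v hv ↦ by simp [hf, hv]
  have hfc : ∀ v, v ∉ Λ → f v = g v := fun v hv ↦ by simp [hf, hv]
  have hdΛ : ∀ v (hv : v ∈ Λ), f v - f (par v) = y ⟨v, hv⟩ := by
    intro v hv
    rw [hfΛ v hv, hfc _ (hΛ v (fun e ↦ hρ (e ▸ hv))), add_sub_cancel_left]
  have hdc : ∀ v, v ∉ Λ → v ≠ ρ → f v - f (par v) = d v := by
    intro v hv hvρ
    rw [hfc v hv, hfc _ (hΛ v hvρ)]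
  have hdB : ∀ v, v ∉ Λ → v ≠ ρ → d v ∈ B ∧ -d v ∈ B := by
    intro v hv hvρ
    have hmem : v ∈ Λᶜ.erase ρ := by simp [hv, hvρ]
    exact ⟨Finset.mem_insert_of_mem (Finset.mem_union_left _ (Finset.mem_image_of_mem d hmem)),
      Finset.mem_insert_of_mem
        (Finset.mem_union_right _ (Finset.mem_image_of_mem (fun u ↦ -d u) hmem))⟩
  refine ⟨f, ?_, ?_, ?_, ?_⟩
  · intro u hu v hv huv
    rw [Finset.mem_coe] at hu hv
    rw [hfΛ u hu, hfΛ v hv] at huv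
    exact congrArg Subtype.val (hyadd ⟨u, hu⟩ ⟨v, hv⟩ huv)
  · intro u hu v hv huv
    have hu' : u ∉ Λ := by simpa using hu
    have hv' : v ∉ Λ := by simpa using hv
    rw [hfc u hu', hfc v hv'] at huv
    exact hginj hu hv huv
  · intro v hvρ hv
    by_cases hvΛ : v ∈ Λ
    · have := hdΛ v hvΛ
      rw [hv, sub_self] at this
      exact hyS ⟨v, hvΛ⟩ (this ▸ Finset.mem_insert_self _ _)
    · rw [hfc v hvΛ, hfc _ (hΛ v hvρ)] at hv
      have := hginj (by simpa using hvΛ) (Finset.mem_coe.2 (hΛ' v hvρ)) hv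
      have hlt := hpar v hvρ
      rw [← this] at hlt
      exact lt_irrefl _ hlt
  · intro u huρ v hvρ huv
    by_cases huΛ : u ∈ Λ <;> by_cases hvΛ : v ∈ Λ
    · rw [hdΛ u huΛ, hdΛ v hvΛ] at huv
      exact congrArg Subtype.val (hysq ⟨u, huΛ⟩ ⟨v, hvΛ⟩ huv)
    · rw [hdΛ u huΛ, hdc v hvΛ hvρ] at huv
      have := hdB v hvΛ hvρ
      rcases huv with e | e
      · exact (hyS _ (e ▸ this.1)).elim
      · exact (hyS _ (e ▸ this.2)).elim
    · rw [hdΛ v hvΛ, hdc u huΛ huρ] at huv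
      have := hdB u huΛ huρ
      rcases huv with e | e
      · exact (hyS _ (e ▸ this.1)).elim
      · refine (hyS ⟨v, hvΛ⟩ ?_).elim
        rw [← neg_neg (y ⟨v, hvΛ⟩), ← e]
        exact this.2
    · rw [hdc u huΛ huρ, hdc v hvΛ hvρ] at huv
      exact hgrain u (by simpa using huΛ) huρ v (by simpa using hvΛ) hvρ huv

/-- A labelling which is injective on a set of leaves and on its complement induces a
labelled graph that is properly colourable with four colours. -/
theorem exists_coloring_of_injOn {U X : Type*} [Fintype U] [DecidableEq U] [Fintype X]
    [DecidableEq X] (par : U → U) (h : U → ℕ) (ρ : U) (hpar : ∀ v, v ≠ ρ → h (par v) < h v)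
    (Λ : Finset U) (hΛ : ∀ v, v ≠ ρ → par v ∉ Λ) (f : U → X) (hf : Set.InjOn f Λ)
    (hf' : Set.InjOn f (Λᶜ : Finset U)) (hne : ∀ v, v ≠ ρ → f v ≠ f (par v)) :
    ∃ c : X → Fin 4, ∀ v, v ≠ ρ → c (f v) ≠ c (f (par v)) := by
  classical
  have hsparse : ∀ s : Finset X, s.Nonempty →
      (Finset.univ.filter fun e : {v : U // v ≠ ρ} ↦ f e ∈ s ∧ f (par e) ∈ s).card <
        2 * s.card := by
    intro s hs
    set L := Λ.filter fun v ↦ f v ∈ s with hL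
    set N := Λᶜ.filter fun v ↦ f v ∈ s with hN
    set N' := N.filter fun v ↦ v ≠ ρ ∧ f (par v) ∈ s with hN'
    have hLcard : L.card ≤ s.card :=
      Finset.card_le_card_of_injOn f (fun v hv ↦ (Finset.mem_filter.1 hv).2)
        (hf.mono (by rw [hL]; exact_mod_cast Finset.filter_subset _ _))
    have hNcard : N.card ≤ s.card :=
      Finset.card_le_card_of_injOn f (fun v hv ↦ (Finset.mem_filter.1 hv).2)
        (hf'.mono (by rw [hN]; exact_mod_cast Finset.filter_subset _ _))
    have hN'card : N'.card < s.card := by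
      by_cases hNe : N.Nonempty
      · obtain ⟨w, hw, hmin⟩ := Finset.exists_min_image N h hNe
        refine lt_of_lt_of_le (Finset.card_lt_card ?_) hNcard
        refine Finset.filter_ssubset.2 ⟨w, hw, fun hw' ↦ ?_⟩
        have hmem : par w ∈ N := by simp [hN, hΛ w hw'.1, hw'.2]
        exact absurd (hpar w hw'.1) (not_lt.2 (hmin _ hmem))
      · rw [Finset.not_nonempty_iff_eq_empty] at hNe
        simpa [hN', hNe] using hs
    calc (Finset.univ.filter fun e : {v : U // v ≠ ρ} ↦ f e ∈ s ∧ f (par e) ∈ s).card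
        ≤ (L ∪ N').card := by
          refine Finset.card_le_card_of_injOn Subtype.val (fun v hv ↦ ?_)
            Subtype.val_injective.injOn
          have hv' := (Finset.mem_filter.1 hv).2
          by_cases hvΛ : (v : U) ∈ Λ <;> simp [hL, hN', hN, hvΛ, hv'.1, hv'.2, v.2]
      _ ≤ L.card + N'.card := Finset.card_union_le _ _
      _ < 2 * s.card := by omega
  obtain ⟨c, hc⟩ := exists_coloring_of_sparse (E := {v : U // v ≠ ρ}) (fun v ↦ f v)
    (fun v ↦ f (par v)) (fun v ↦ hne v v.2) hsparse
  exact ⟨c, fun v hv ↦ hc ⟨v, hv⟩⟩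

/-- Four pairwise independent linear forms in two variables over a ring in which `2` is
invertible. -/
def directionForm {R : Type*} [Ring R] : Fin 4 → R × R → R :=
  ![fun s ↦ s.1, fun s ↦ s.2, fun s ↦ s.1 + s.2, fun s ↦ s.1 - s.2]

theorem directionForm_bijective {r : ℕ} [NeZero r] (hodd : Odd r) {a b : Fin 4} (hab : a ≠ b) :
    Function.Bijective fun s : ZMod r × ZMod r ↦ (directionForm a s, directionForm b s) := by
  have h2 : IsUnit (2 : ZMod r) := by
    have := (ZMod.isUnit_iff_coprime 2 r).2 (Nat.coprime_two_left.2 hodd)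
    exact_mod_cast this
  have hcancel : ∀ x y : ZMod r, 2 * x = 2 * y → x = y := fun x y h ↦ h2.mul_left_cancel h
  refine Finite.injective_iff_bijective.1 ?_
  rintro ⟨j, k⟩ ⟨j', k'⟩ h
  rw [Prod.mk.injEq] at h
  obtain ⟨h1, h3⟩ := h
  have : j = j' ∧ k = k' := by
    fin_cases a <;> fin_cases b <;> simp [directionForm] at hab h1 h3 <;>
      constructor <;> first
        | (apply hcancel; linear_combination h1 + h3)
        | (apply hcancel; linear_combination h1 - h3)
        | (apply hcancel; linear_combination h3 - h1)
        | (apply hcancel; linear_combination 2 * h1)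
        | (apply hcancel; linear_combination 2 * h3)
        | (apply hcancel; linear_combination 2 * h1 + 2 * h3)
        | (apply hcancel; linear_combination 2 * h1 - 2 * h3)
        | (apply hcancel; linear_combination 2 * h3 - 2 * h1)
  exact Prod.ext this.1 this.2

/-- The edges of a tree are the pairs formed by a vertex other than the root and its parent. -/
theorem SimpleGraph.IsTree.exists_parent {V : Type*} {T : SimpleGraph V} (hT : T.IsTree) (ρ : V) :
    ∃ (par : V → V) (h : V → ℕ), (∀ v, v ≠ ρ → h (par v) < h v) ∧
      ∀ u v, T.Adj u v ↔ (u ≠ ρ ∧ par u = v) ∨ (v ≠ ρ ∧ par v = u) := by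
  choose w hw using fun v ↦ hT.1.exists_walk_length_eq_dist v ρ
  have hnil : ∀ v, v ≠ ρ → ¬ (w v).Nil := fun v hv hn ↦ hv hn.eq
  have hpath : ∀ v, (w v).IsPath := fun v ↦ (w v).isPath_of_length_eq_dist (hw v)
  have hadj : ∀ v, v ≠ ρ → T.Adj v (w v).snd := fun v hv ↦ (w v).adj_snd (hnil v hv)
  have hdist : ∀ u v, T.Adj u v → T.dist u ρ = T.dist v ρ + 1 → u ≠ ρ ∧ (w u).snd = v := by
    intro u v huv hd
    have hne : u ≠ ρ := by
      rintro rfl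
      simp at hd
    refine ⟨hne, ?_⟩
    have hlen : (SimpleGraph.Walk.cons huv (w v)).length = T.dist u ρ := by
      rw [SimpleGraph.Walk.length_cons, hw, hd]
    have := (hT.existsUnique_path u ρ).unique (hpath u)
      (SimpleGraph.Walk.isPath_of_length_eq_dist _ hlen)
    rw [this]
    simp
  refine ⟨fun v ↦ (w v).snd, fun v ↦ T.dist v ρ, fun v hv ↦ ?_, fun u v ↦ ⟨fun huv ↦ ?_, ?_⟩⟩
  · have h1 := SimpleGraph.dist_le (w v).tail
    have h2 := SimpleGraph.Walk.length_tail_add_one (hnil v hv)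
    have h3 := hw v
    dsimp only
    omega
  · have := hT.dist_eq_dist_add_one_of_adj ρ huv
    rw [SimpleGraph.dist_comm (u := ρ), SimpleGraph.dist_comm (u := ρ)] at this
    rcases this with h | h
    · exact Or.inl (hdist u v huv h)
    · exact Or.inr (hdist v u huv.symm h)
  · rintro (⟨hu, rfl⟩ | ⟨hv, rfl⟩)
    · exact hadj u hu
    · exact (hadj v hv).symm

theorem exists_eq_or_eq_neg_of_rainbow {ι : Type*} [Fintype ι] {m p : ℕ} [Fact p.Prime]
    (hpm : p = 2 * m + 1) (hι : Fintype.card ι = m) (d : ι → ZMod p) (hd : ∀ v, d v ≠ 0)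
    (hrain : ∀ u v, (d u = d v ∨ d u = -d v) → u = v) (x : ZMod p) (hx : x ≠ 0) :
    ∃ v, d v = x ∨ d v = -x := by
  have h2 : ∀ v, d v ≠ -d v := fun v ↦ ZMod.ne_neg_self ⟨m, hpm⟩ (hd v)
  set F : ι × Bool → {x : ZMod p // x ≠ 0} := fun q ↦
    if q.2 then ⟨d q.1, hd q.1⟩ else ⟨-d q.1, neg_ne_zero.2 (hd q.1)⟩ with hF
  have hinj : Function.Injective F := by
    rintro ⟨u, a⟩ ⟨v, b⟩ h
    rw [Subtype.ext_iff] at h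
    have huv : u = v := by
      cases a <;> cases b <;> simp [hF] at h
      · exact hrain u v (Or.inl h)
      · exact hrain u v (Or.inr (by rw [← h, neg_neg]))
      · exact hrain u v (Or.inr h)
      · exact hrain u v (Or.inl h)
    subst huv
    cases a <;> cases b <;> simp [hF] at h ⊢
    · exact h2 u h.symm
    · exact h2 u h
  have hsurj := ((Fintype.bijective_iff_injective_and_card F).2 ⟨hinj, by
    rw [Fintype.card_prod, hι, Fintype.card_bool, Fintype.card_subtype_compl, ZMod.card,
      Fintype.card_subtype_eq]
    omega⟩).2
  obtain ⟨⟨v, b⟩, hv⟩ := hsurj ⟨x, hx⟩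
  rw [Subtype.ext_iff] at hv
  refine ⟨v, ?_⟩
  cases b <;> simp [hF] at hv
  · exact Or.inr (by rw [← hv, neg_neg])
  · exact Or.inl hv

/-- A criterion for a rooted tree to decompose a graph, in terms of its parent map. -/
theorem decomposes_of_parent {V β ι : Type} {T : SimpleGraph V} {G : SimpleGraph β}
    {par : V → V} {ρ : V}
    (hadj : ∀ u v, T.Adj u v ↔ (u ≠ ρ ∧ par u = v) ∨ (v ≠ ρ ∧ par v = u)) (φ : ι → V → β)
    (hinj : ∀ i, Function.Injective (φ i))
    (hhom : ∀ i v, v ≠ ρ → G.Adj (φ i v) (φ i (par v)))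
    (huniq : ∀ i v i' v', v ≠ ρ → v' ≠ ρ →
      s(φ i v, φ i (par v)) = s(φ i' v', φ i' (par v')) → i = i' ∧ v = v')
    (hsurj : ∀ a b, G.Adj a b → ∃ i v, v ≠ ρ ∧ s(φ i v, φ i (par v)) = s(a, b)) :
    Decomposes T G := by
  have hedge : ∀ e ∈ T.edgeSet, ∃ v, v ≠ ρ ∧ e = s(v, par v) := by
    intro e
    induction e with
    | _ u v =>
      intro he
      rcases (hadj u v).1 he with ⟨hu, rfl⟩ | ⟨hv, rfl⟩
      · exact ⟨u, hu, rfl⟩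
      · exact ⟨v, hv, Sym2.eq_swap⟩
  refine ⟨ι, φ, hinj, fun i a b hab ↦ ?_, fun e ↦ ?_⟩
  · rcases (hadj a b).1 hab with ⟨hu, rfl⟩ | ⟨hv, rfl⟩
    · exact hhom i a hu
    · exact (hhom i b hv).symm
  · induction e with
    | _ a b =>
      intro he
      obtain ⟨i, v, hv, hiv⟩ := hsurj a b he
      refine ⟨(i, s(v, par v)), ⟨(hadj _ _).2 (Or.inl ⟨hv, rfl⟩), hiv⟩, ?_⟩
      rintro ⟨i', e'⟩ ⟨he', hmap⟩
      obtain ⟨v', hv', rfl⟩ := hedge e' he'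
      obtain ⟨rfl, rfl⟩ := huniq i' v' i v hv' hv (hmap.trans hiv.symm)
      rfl

theorem Decomposes.of_iso {α β γ : Type} {H : SimpleGraph α} {G : SimpleGraph β}
    {G' : SimpleGraph γ} (h : Decomposes H G) (e : G ≃g G') : Decomposes H G' := by
  obtain ⟨ι, f, hinj, hhom, hex⟩ := h
  refine ⟨ι, fun i a ↦ e (f i a), fun i ↦ e.injective.comp (hinj i),
    fun i a b hab ↦ e.map_adj_iff.2 (hhom i a b hab), fun x hx ↦ ?_⟩
  have hmem : Sym2.map e.symm x ∈ G.edgeSet := by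
    induction x with
    | _ a b => exact e.symm.map_adj_iff.2 hx
  have hiff : ∀ q : ι × Sym2 α,
      Sym2.map (fun a ↦ e (f q.1 a)) q.2 = x ↔ Sym2.map (f q.1) q.2 = Sym2.map e.symm x := by
    intro q
    have h1 : Sym2.map (fun a ↦ e (f q.1 a)) q.2 = Sym2.map e (Sym2.map (f q.1) q.2) := by
      rw [Sym2.map_map]; rfl
    have h2 : Sym2.map e (Sym2.map e.symm x) = x := by
      rw [Sym2.map_map]
      have : (e ∘ e.symm : γ → γ) = id := funext fun y ↦ e.apply_symm_apply y
      rw [this, Sym2.map_id, id]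
    rw [h1]
    refine ⟨fun h ↦ Sym2.map.injective e.injective (h.trans h2.symm), fun h ↦ by rw [h, h2]⟩
  simpa only [hiff] using hex _ hmem

/-- The nonzero residues modulo `2 * k + 1` split into a half `P` and its negative. -/
theorem exists_half_zmod (k : ℕ) (hk : 1 ≤ k) :
    ∃ P : Finset (ZMod (2 * k + 1)), P.card = k ∧ 0 ∉ P ∧ -1 ∉ P ∧
      (∀ a, a ≠ 0 → a ∈ P ∨ -a ∈ P) ∧ ∀ a ∈ P, -a ∉ P := by
  have hlt : ∀ a : ZMod (2 * k + 1), a.val < 2 * k + 1 := fun a ↦ ZMod.val_lt a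
  have hmem : ∀ a : ZMod (2 * k + 1),
      a ∈ (Finset.Icc 1 k).image (Nat.cast : ℕ → ZMod (2 * k + 1)) ↔ 1 ≤ a.val ∧ a.val ≤ k := by
    intro a
    rw [Finset.mem_image]
    constructor
    · rintro ⟨n, hn, rfl⟩
      rw [Finset.mem_Icc] at hn
      rwa [ZMod.val_natCast_of_lt (by omega)]
    · intro ha
      exact ⟨a.val, Finset.mem_Icc.2 ha, ZMod.natCast_zmod_val a⟩
  have hzero : ∀ a : ZMod (2 * k + 1), a ≠ 0 → 1 ≤ a.val := fun a ha ↦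
    Nat.one_le_iff_ne_zero.2 ((ZMod.val_ne_zero a).2 ha)
  have hdisj : ∀ a ∈ (Finset.Icc 1 k).image (Nat.cast : ℕ → ZMod (2 * k + 1)),
      -a ∉ (Finset.Icc 1 k).image (Nat.cast : ℕ → ZMod (2 * k + 1)) := by
    intro a ha
    rw [hmem] at ha ⊢
    have hne : a ≠ 0 := (ZMod.val_ne_zero a).1 (by omega)
    rw [ZMod.neg_val, if_neg hne]
    omega
  refine ⟨(Finset.Icc 1 k).image (Nat.cast : ℕ → ZMod (2 * k + 1)), ?_, ?_, ?_, ?_, hdisj⟩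
  · rw [Finset.card_image_of_injOn, Nat.card_Icc, Nat.add_sub_cancel]
    intro a ha b hb hab
    rw [Finset.coe_Icc, Set.mem_Icc] at ha hb
    have := congrArg ZMod.val hab
    rwa [ZMod.val_natCast_of_lt (by omega), ZMod.val_natCast_of_lt (by omega)] at this
  · simp [hmem]
  · exact hdisj 1 (Finset.mem_image.2 ⟨1, Finset.mem_Icc.2 ⟨le_rfl, hk⟩, Nat.cast_one⟩)
  · intro a ha
    have h1 := hzero a ha
    have h2 := hlt a
    rw [hmem, hmem, ZMod.neg_val, if_neg ha]
    omega

/-- The complete graph on `A ⊕ B` minus the edges inside `B`. -/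
def completeMinusRight (A B : Type*) : SimpleGraph (A ⊕ B) where
  Adj a b := a ≠ b ∧ (a.isLeft ∨ b.isLeft)
  symm := ⟨fun _ _ h ↦ ⟨h.1.symm, h.2.symm⟩⟩
  loopless := ⟨fun _ h ↦ h.1 rfl⟩

/-- A labelling of a rooted tree, minus a leaf `z` attached to the root, by `ZMod p` with distinct
differences up to sign, whose fibres have at most two elements and can be assigned pairwise
independent directions, yields a decomposition of a complete graph minus a clique. -/
theorem decomposes_completeMinusRight_of_rainbow {V : Type} {T : SimpleGraph V} {par : V → V}
    {ρ z : V} {p r : ℕ} [NeZero r] (hp : Odd p) (hr : Odd r)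
    (hadj : ∀ u v, T.Adj u v ↔ (u ≠ ρ ∧ par u = v) ∨ (v ≠ ρ ∧ par v = u))
    (hzρ : z ≠ ρ) (hparz : par z = ρ) (hpar : ∀ v, v ≠ ρ → par v ≠ z)
    (f : V → ZMod p) (o : V → ZMod r) (c : ZMod p → Fin 4)
    (hne : ∀ v, v ≠ z → v ≠ ρ → f v ≠ f (par v))
    (hrain : ∀ u v, u ≠ z → u ≠ ρ → v ≠ z → v ≠ ρ →
      (f u - f (par u) = f v - f (par v) ∨ f u - f (par u) = -(f v - f (par v))) → u = v)
    (hfull : ∀ x : ZMod p, x ≠ 0 → ∃ v, v ≠ z ∧ v ≠ ρ ∧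
      (f v - f (par v) = x ∨ f v - f (par v) = -x))
    (hinj : ∀ u v, u ≠ z → v ≠ z → f u = f v → o u = o v → u = v)
    (hoρ : o ρ = 0) (ho : ∀ v, o v = 0 ∨ o v = 1)
    (hc : ∀ v, v ≠ z → v ≠ ρ → c (f v) ≠ c (f (par v)))
    (P : Finset (ZMod r)) (hP0 : 0 ∉ P) (hP1 : -1 ∉ P) (hP : ∀ a, a ≠ 0 → a ∈ P ∨ -a ∈ P)
    (hPneg : ∀ a ∈ P, -a ∉ P) :
    Decomposes T (completeMinusRight (ZMod p × ZMod r) {a : ZMod r // a ∉ P}) := by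
  classical
  obtain ⟨k, hk⟩ : ∃ k : Fin 4, c (f ρ) ≠ k := by
    obtain ⟨k, hk⟩ := exists_ne (c (f ρ))
    exact ⟨k, hk.symm⟩
  set L : Fin 4 → ZMod r × ZMod r → ZMod r := directionForm with hL
  have hbij : ∀ {a b : Fin 4}, a ≠ b →
      Function.Bijective fun s : ZMod r × ZMod r ↦ (L a s, L b s) :=
    fun h ↦ directionForm_bijective hr h
  have hLinj : ∀ {a b : Fin 4}, a ≠ b → ∀ s s' : ZMod r × ZMod r,
      L a s = L a s' → L b s = L b s' → s = s' := fun h s s' h1 h2 ↦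
    (hbij h).1 (Prod.ext h1 h2)
  have hLsurj : ∀ {a b : Fin 4}, a ≠ b → ∀ x y, ∃ s : ZMod r × ZMod r, L a s = x ∧ L b s = y := by
    intro a b h x y
    obtain ⟨s, hs⟩ := (hbij h).2 (x, y)
    exact ⟨s, congrArg Prod.fst hs, congrArg Prod.snd hs⟩
  set Φ : ZMod p × (ZMod r × ZMod r) → V → (ZMod p × ZMod r) ⊕ {a : ZMod r // a ∉ P} :=
    fun q v ↦ if v = z then
      (if h : L k q.2 ∈ P then Sum.inl (f ρ + q.1, L (c (f ρ)) q.2 - L k q.2)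
        else Sum.inr ⟨L k q.2, h⟩)
      else Sum.inl (f v + q.1, L (c (f v)) q.2 + o v) with hΦ
  have hΦz : ∀ q, L k q.2 ∈ P → Φ q z = Sum.inl (f ρ + q.1, L (c (f ρ)) q.2 - L k q.2) :=
    fun q h ↦ by simp [hΦ, h]
  have hΦz' : ∀ q (h : L k q.2 ∉ P), Φ q z = Sum.inr ⟨L k q.2, h⟩ := fun q h ↦ by simp [hΦ, h]
  have hΦv : ∀ q v, v ≠ z → Φ q v = Sum.inl (f v + q.1, L (c (f v)) q.2 + o v) :=
    fun q v h ↦ by simp [hΦ, h]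
  have hΦρ : ∀ q, Φ q ρ = Sum.inl (f ρ + q.1, L (c (f ρ)) q.2) := fun q ↦ by
    rw [hΦv q ρ hzρ.symm, hoρ, add_zero]
  have hΦne : ∀ q v, v ≠ z → Φ q v ≠ Φ q z := by
    intro q v hv he
    rw [hΦv q v hv] at he
    by_cases hq : L k q.2 ∈ P
    · rw [hΦz q hq, Sum.inl.injEq, Prod.mk.injEq, add_left_inj] at he
      obtain ⟨h1, h2⟩ := he
      rw [h1] at h2
      have h3 : L k q.2 = -o v := by linear_combination h2
      rcases ho v with h4 | h4 <;> rw [h3, h4] at hq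
      · exact hP0 (by simpa using hq)
      · exact hP1 hq
    · rw [hΦz' q hq] at he
      exact absurd he (by simp)
  have hΦinj : ∀ q, Function.Injective (Φ q) := by
    intro q u v huv
    by_cases hu : u = z <;> by_cases hv : v = z
    · rw [hu, hv]
    · exact (hΦne q v hv (by rw [← huv, hu])).elim
    · exact (hΦne q u hu (by rw [huv, hv])).elim
    · rw [hΦv q u hu, hΦv q v hv, Sum.inl.injEq, Prod.mk.injEq, add_left_inj] at huv
      obtain ⟨h1, h2⟩ := huv
      rw [h1, add_right_inj] at h2
      exact hinj u v hu hv h1 h2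
  have hmix : ∀ q q' v, v ≠ z → v ≠ ρ → s(Φ q z, Φ q ρ) ≠ s(Φ q' v, Φ q' (par v)) := by
    intro q q' v hvz hvρ he
    rw [hΦρ, hΦv q' v hvz, hΦv q' _ (hpar v hvρ)] at he
    by_cases hq : L k q.2 ∈ P
    · rw [hΦz q hq] at he
      simp only [Sym2.eq_iff, Sum.inl.injEq, Prod.mk.injEq] at he
      refine hne v hvz hvρ ?_
      rcases he with ⟨h1, h2⟩ | ⟨h1, h2⟩
      · linear_combination h2.1 - h1.1
      · linear_combination h1.1 - h2.1
    · rw [hΦz' q hq] at he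
      simp at he
  refine decomposes_of_parent hadj Φ hΦinj ?_ ?_ ?_
  · intro q v hv
    refine ⟨fun he ↦ ?_, Or.inr ?_⟩
    · have h1 := hΦinj q he
      exact T.loopless.irrefl v ((hadj v v).2 (Or.inl ⟨hv, h1.symm⟩))
    · rw [hΦv q _ (hpar v hv)]
      rfl
  · rintro ⟨i, s⟩ v ⟨i', s'⟩ v' hv hv' he
    by_cases hvz : v = z <;> by_cases hvz' : v' = z
    · subst hvz
      subst hvz'
      refine ⟨?_, rfl⟩
      rw [hparz, hΦρ, hΦρ] at he
      by_cases hq : L k s ∈ P <;> by_cases hq' : L k s' ∈ P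
      · rw [hΦz _ hq, hΦz _ hq'] at he
        simp only [Sym2.eq_iff, Sum.inl.injEq, Prod.mk.injEq, add_right_inj] at he
        rcases he with ⟨⟨h1, h2⟩, h3, h4⟩ | ⟨⟨h1, h2⟩, h3, h4⟩
        · exact Prod.ext h1 (hLinj hk s s' h4 (by linear_combination h4 - h2))
        · refine (hPneg _ hq ?_).elim
          have h5 : -L k s = L k s' := by linear_combination h2 - h4
          rwa [h5]
      · rw [hΦz _ hq, hΦz' _ hq'] at he
        simp at he
      · rw [hΦz' _ hq, hΦz _ hq'] at he
        simp at he
      · rw [hΦz' _ hq, hΦz' _ hq'] at he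
        simp at he
        exact Prod.ext he.2.1 (hLinj hk s s' he.2.2 he.1)
    · subst hvz
      rw [hparz] at he
      exact (hmix _ _ v' hvz' hv' he).elim
    · subst hvz'
      rw [hparz] at he
      exact (hmix _ _ v hvz hv he.symm).elim
    · rw [hΦv _ v hvz, hΦv _ _ (hpar v hv), hΦv _ v' hvz', hΦv _ _ (hpar v' hv')] at he
      simp only [Sym2.eq_iff, Sum.inl.injEq, Prod.mk.injEq] at he
      rcases he with ⟨⟨h1, h2⟩, h3, h4⟩ | ⟨⟨h1, h2⟩, h3, h4⟩
      · obtain rfl := hrain v v' hvz hv hvz' hv' (Or.inl (by linear_combination h1 - h3))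
        rw [add_left_inj] at h2 h4
        rw [add_right_inj] at h1
        exact ⟨Prod.ext h1 (hLinj (hc v hvz hv) s s' h2 h4), rfl⟩
      · obtain rfl := hrain v v' hvz hv hvz' hv' (Or.inr (by linear_combination h1 - h3))
        exact (ZMod.ne_neg_self hp (sub_ne_zero.2 (hne v hvz hv))
          (by linear_combination h1 - h3)).elim
  · have hcross : ∀ v x x' a a', v ≠ z → v ≠ ρ → f v - f (par v) = x - x' →
        ∃ q w, w ≠ ρ ∧ s(Φ q w, Φ q (par w)) = s(Sum.inl (x, a), Sum.inl (x', a')) := by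
      intro v x x' a a' hvz hv hd
      obtain ⟨s, hs, hs'⟩ := hLsurj (hc v hvz hv) (a - o v) (a' - o (par v))
      refine ⟨(x - f v, s), v, hv, ?_⟩
      rw [hΦv _ v hvz, hΦv _ _ (hpar v hv)]
      dsimp only
      rw [hs, hs', sub_add_cancel, sub_add_cancel, add_sub_cancel,
        show f (par v) + (x - f v) = x' by linear_combination -hd]
    have hinside : ∀ x a a', a - a' ∈ P →
        ∃ q w, w ≠ ρ ∧ s(Φ q w, Φ q (par w)) = s(Sum.inl (x, a), Sum.inl (x, a')) := by
      intro x a a' ha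
      obtain ⟨s, hs, hs'⟩ := hLsurj hk a (a - a')
      refine ⟨(x - f ρ, s), z, hzρ, ?_⟩
      rw [hparz, hΦρ, hΦz _ (by rw [hs']; exact ha)]
      dsimp only
      rw [hs, hs', sub_sub_cancel, add_sub_cancel, Sym2.eq_swap]
    have hout : ∀ x a e, ∃ q w, w ≠ ρ ∧
        s(Φ q w, Φ q (par w)) = s(Sum.inl (x, a), Sum.inr e) := by
      rintro x a ⟨e, he⟩
      obtain ⟨s, hs, hs'⟩ := hLsurj hk a e
      refine ⟨(x - f ρ, s), z, hzρ, ?_⟩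
      rw [hparz, hΦρ, hΦz' _ (by rw [hs']; exact he)]
      dsimp only
      simp only [hs, hs', add_sub_cancel]
      rw [Sym2.eq_swap]
    rintro (⟨x, a⟩ | e) (⟨x', a'⟩ | e') hab
    · by_cases hx : x = x'
      · subst hx
        have ha : a - a' ≠ 0 := by
          intro h
          exact hab.1 (by rw [sub_eq_zero.1 h])
        rcases hP _ ha with h | h
        · exact hinside x a a' h
        · rw [neg_sub] at h
          rw [Sym2.eq_swap]
          exact hinside x a' a h
      · obtain ⟨v, hvz, hv, hd | hd⟩ := hfull (x - x') (sub_ne_zero.2 hx)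
        · exact hcross v x x' a a' hvz hv hd
        · rw [neg_sub] at hd
          rw [Sym2.eq_swap]
          exact hcross v x' x a' a hvz hv hd
    · exact hout x a e'
    · rw [Sym2.eq_swap]
      exact hout x' a' e
    · exact absurd hab.2 (by simp)

/-- The complete graph minus a clique, in the form with a chosen set of clique vertices. -/
theorem nonempty_completeMinusRight_iso {A B : Type*} [Fintype A] [Fintype B] {n : ℕ}
    (W : Finset (Fin n)) (hB : Fintype.card B = W.card)
    (hA : Fintype.card A + W.card = n) :
    Nonempty (completeMinusRight A B ≃g (⊤ : SimpleGraph (Fin n)).deleteEdges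
      {e : Sym2 (Fin n) | ∀ v ∈ e, v ∈ W}) := by
  classical
  have e₁ : B ≃ {x // x ∈ W} := Fintype.equivOfCardEq (by simpa using hB)
  have e₂ : A ≃ {x // x ∉ W} := Fintype.equivOfCardEq (by
    rw [Fintype.card_subtype_compl, Fintype.card_fin, Fintype.card_coe]
    omega)
  set e : A ⊕ B ≃ Fin n := (Equiv.sumComm A B).trans
    ((Equiv.sumCongr e₁ e₂).trans (Equiv.sumCompl fun x ↦ x ∈ W)) with he
  have hmem : ∀ x, e x ∈ W ↔ ¬ x.isLeft := by
    rintro (a | b)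
    · simpa [he] using (e₂ a).2
    · simp [he]
  refine ⟨⟨e, fun {a b} ↦ ?_⟩⟩
  simp only [SimpleGraph.deleteEdges_adj, SimpleGraph.top_adj, Set.mem_ofPred_eq, Sym2.mem_iff,
    forall_eq_or_imp, forall_eq, hmem, e.injective.ne_iff, completeMinusRight]
  tauto

/-- Let `r ≥ 3` be odd, `p = 2m+1 > 10` a prime, `t = (r+1)/2` and `n = r(2m+1) + t`.
Let `T` be a tree with `m+1` edges having a leaf `z` such that `T − z` has at least `2m/5`
leaves. Then `T` decomposes `K_n \ K_t`, the complete graph on `n` vertices minus the edges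
inside a fixed `t`-element subset `W` of its vertices. -/
theorem tree_decomposes_complete_minus_clique
    (r p m t n : ℕ) (hr : 3 ≤ r) (hodd : Odd r)
    (hp : p.Prime) (hpm : p = 2 * m + 1) (hp10 : 10 < p)
    (ht : t = (r + 1) / 2) (hn : n = r * (2 * m + 1) + t)
    {V : Type} [Fintype V] (T : SimpleGraph V) (hT : T.IsTree)
    (hedges : T.edgeSet.ncard = m + 1)
    (z : V) (hz : (T.neighborSet z).ncard = 1)
    (hleaves : 2 * m ≤ 5 *
      {v : {w : V // w ≠ z} |
        ((T.induce {w : V | w ≠ z}).neighborSet v).ncard = 1}.ncard)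
    (W : Finset (Fin n)) (hW : W.card = t) :
    Decomposes T ((⊤ : SimpleGraph (Fin n)).deleteEdges
      {e : Sym2 (Fin n) | ∀ v ∈ e, v ∈ W}) := by
  classical
  have : Fact p.Prime := ⟨hp⟩
  obtain ⟨k, hk⟩ := hodd
  have : NeZero r := ⟨by omega⟩
  obtain ⟨y, hy⟩ := Set.ncard_eq_one.1 hz
  have hzadj : ∀ v, T.Adj z v ↔ v = y := fun v ↦ by
    rw [← SimpleGraph.mem_neighborSet, hy, Set.mem_singleton_iff]
  have hzy : z ≠ y := ((hzadj y).2 rfl).ne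
  obtain ⟨par, h, hpar, hadj⟩ := hT.exists_parent y
  have hparz : par z = y := by
    rcases (hadj z y).1 ((hzadj y).2 rfl) with h1 | h1
    · exact h1.2
    · exact (h1.1 rfl).elim
  have hparne : ∀ v, v ≠ y → par v ≠ z := fun v hv hpv ↦
    hv ((hzadj v).1 ((hadj z v).2 (Or.inr ⟨hv, hpv⟩)))
  have hV : Fintype.card V = m + 2 := by
    have h1 := hT.card_edgeFinset
    rw [Set.ncard_eq_toFinset_card'] at hedges
    rw [SimpleGraph.edgeFinset, hedges] at h1
    exact h1.symm
  have hU : Fintype.card {w : V // w ≠ z} = m + 1 := by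
    rw [Fintype.card_subtype_compl, Fintype.card_subtype_eq, hV]
    rfl
  set ρ : {w : V // w ≠ z} := ⟨y, hzy.symm⟩ with hρ
  set parU : {w : V // w ≠ z} → {w : V // w ≠ z} := fun v ↦
    if hv : par v ≠ z then ⟨par v, hv⟩ else ρ with hparU
  have hneρ : ∀ v : {w : V // w ≠ z}, v ≠ ρ ↔ (v : V) ≠ y := fun v ↦ by
    rw [Ne, Subtype.ext_iff]
  have hparU_coe : ∀ v : {w : V // w ≠ z}, v ≠ ρ → (parU v : V) = par v := fun v hv ↦ by
    simp [hparU, hparne v ((hneρ v).1 hv)]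
  have hparU_lt : ∀ v : {w : V // w ≠ z}, v ≠ ρ → h (parU v) < h v := fun v hv ↦ by
    rw [hparU_coe v hv]
    exact hpar v ((hneρ v).1 hv)
  set S : Set {w : V // w ≠ z} :=
    {v | ((T.induce {w : V | w ≠ z}).neighborSet v).ncard = 1} with hS
  set Λ : Finset {w : V // w ≠ z} := S.toFinset.erase ρ with hΛ
  have hΛcard : 2 * m ≤ 5 * (Λ.card + 1) := by
    have h1 := Finset.pred_card_le_card_erase (s := S.toFinset) (a := ρ)
    rw [Set.ncard_eq_toFinset_card'] at hleaves
    rw [← hΛ] at h1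
    omega
  have hparΛ : ∀ v, v ≠ ρ → parU v ∉ Λ := by
    intro v hv hmem
    rw [hΛ, Finset.mem_erase, Set.mem_toFinset] at hmem
    obtain ⟨hu, huS⟩ := hmem
    obtain ⟨w, hw⟩ := Set.ncard_eq_one.1 huS
    have h1 : v ∈ (T.induce {w : V | w ≠ z}).neighborSet (parU v) :=
      (hadj _ _).2 (Or.inr ⟨(hneρ v).1 hv, (hparU_coe v hv).symm⟩)
    have h2 : parU (parU v) ∈ (T.induce {w : V | w ≠ z}).neighborSet (parU v) :=
      (hadj _ _).2 (Or.inl ⟨(hneρ _).1 hu, (hparU_coe _ hu).symm⟩)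
    rw [hw, Set.mem_singleton_iff] at h1 h2
    have h3 := hparU_lt v hv
    have h4 := hparU_lt _ hu
    rw [h2, ← h1] at h4
    omega
  obtain ⟨f, hf1, hf2, hfne, hfrain⟩ := exists_rainbow_of_leaves hpm parU (fun v ↦ h v) ρ
    hparU_lt hU Λ (Finset.notMem_erase _ _) hparΛ hΛcard
  obtain ⟨c, hc⟩ := exists_coloring_of_injOn parU (fun v ↦ h v) ρ hparU_lt Λ hparΛ f hf1 hf2 hfne
  have hfull := exists_eq_or_eq_neg_of_rainbow (ι := {v : {w : V // w ≠ z} // v ≠ ρ}) hpm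
    (by rw [Fintype.card_subtype_compl, Fintype.card_subtype_eq, hU]; rfl)
    (fun v ↦ f v - f (parU v)) (fun v ↦ sub_ne_zero.2 (hfne v v.2))
    (fun u v huv ↦ Subtype.ext (hfrain u u.2 v v.2 huv))
  set g : V → ZMod p := fun v ↦ if hv : v ≠ z then f ⟨v, hv⟩ else 0 with hg
  set o : V → ZMod r := fun v ↦ if ∃ hv : v ≠ z, (⟨v, hv⟩ : {w : V // w ≠ z}) ∈ Λ then 1 else 0
    with ho
  have hgv : ∀ v (hv : v ≠ z), g v = f ⟨v, hv⟩ := fun v hv ↦ by simp [hg, hv]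
  have hgpar : ∀ v (hv : v ≠ z), v ≠ y → g (par v) = f (parU ⟨v, hv⟩) := fun v hv hvy ↦ by
    rw [hgv _ (hparne v hvy)]
    congr 1
    exact Subtype.ext (hparU_coe ⟨v, hv⟩ ((hneρ _).2 hvy)).symm
  have hov : ∀ v (hv : v ≠ z), o v = if (⟨v, hv⟩ : {w : V // w ≠ z}) ∈ Λ then 1 else 0 :=
    fun v hv ↦ by simp [ho, hv]
  obtain ⟨P, hPcard, hP0, hP1, hP, hPneg⟩ : ∃ P : Finset (ZMod r), P.card = k ∧ 0 ∉ P ∧ -1 ∉ P ∧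
      (∀ a, a ≠ 0 → a ∈ P ∨ -a ∈ P) ∧ ∀ a ∈ P, -a ∉ P := by
    subst hk
    exact exists_half_zmod k (by omega)
  obtain ⟨e⟩ := nonempty_completeMinusRight_iso (A := ZMod p × ZMod r)
    (B := {a : ZMod r // a ∉ P}) W
    (by rw [Fintype.card_subtype_compl, ZMod.card, Fintype.card_coe, hPcard]; omega)
    (by rw [Fintype.card_prod, ZMod.card, ZMod.card, hW, hn, hpm, mul_comm])
  refine Decomposes.of_iso ?_ e
  refine decomposes_completeMinusRight_of_rainbow ⟨m, hpm⟩ ⟨k, hk⟩ hadj hzy hparz hparne g o c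
    ?_ ?_ ?_ ?_ ?_ ?_ ?_ P hP0 hP1 hP hPneg
  · intro v hvz hvy
    rw [hgv v hvz, hgpar v hvz hvy]
    exact hfne _ ((hneρ _).2 hvy)
  · intro u v huz huy hvz hvy huv
    rw [hgv u huz, hgpar u huz huy, hgv v hvz, hgpar v hvz hvy] at huv
    exact congrArg Subtype.val (hfrain _ ((hneρ _).2 huy) _ ((hneρ _).2 hvy) huv)
  · intro x hx
    obtain ⟨⟨⟨v, hvz⟩, hvρ⟩, hv⟩ := hfull x hx
    have hvy := (hneρ _).1 hvρ
    refine ⟨v, hvz, hvy, ?_⟩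
    rwa [hgv v hvz, hgpar v hvz hvy]
  · intro u v huz hvz huv hou
    rw [hgv u huz, hgv v hvz] at huv
    rw [hov u huz, hov v hvz] at hou
    have : Fact (1 < r) := ⟨by omega⟩
    by_cases hu : (⟨u, huz⟩ : {w : V // w ≠ z}) ∈ Λ <;>
      by_cases hv : (⟨v, hvz⟩ : {w : V // w ≠ z}) ∈ Λ
    · exact congrArg Subtype.val (hf1 hu hv huv)
    · simp [hu, hv] at hou
    · simp [hu, hv] at hou
    · exact congrArg Subtype.val (hf2 (by simpa using hu) (by simpa using hv) huv)
  · rw [hov y hzy.symm, if_neg (Finset.notMem_erase _ _)]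
  · intro v
    by_cases hv : ∃ hv : v ≠ z, (⟨v, hv⟩ : {w : V // w ≠ z}) ∈ Λ
    · exact Or.inr (if_pos hv)
    · exact Or.inl (if_neg hv)
  · intro v hvz hvy
    rw [hgv v hvz, hgpar v hvz hvy]
    exact hc _ ((hneρ _).2 hvy)
end

section
/- As m → ∞ over integers m such that p = 2m+1 is a prime, the proportion of isomorphism classes of (unlabelled) trees with m+1 edges that decompose K_{6m+5} \ e (the complete graph on 6m+5 vertices minus one edge) tends to 1. -/
/-- Trees with `m` edges, on the labelled vertex set `Fin (m+1)`. -/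
def TreeOn (m : ℕ) : Type := {T : SimpleGraph (Fin (m + 1)) // T.IsTree}

/-- Two labelled trees are equivalent iff they are isomorphic as graphs. -/
def treeSetoid (m : ℕ) : Setoid (TreeOn m) where
  r T₁ T₂ := Nonempty (T₁.val ≃g T₂.val)
  iseqv := ⟨fun _ => ⟨SimpleGraph.Iso.refl⟩,
    fun ⟨e⟩ => ⟨e.symm⟩, fun ⟨e⟩ ⟨e'⟩ => ⟨e.trans e'⟩⟩

/-- The isomorphism classes of (unlabelled) trees with `m` edges. -/
def UnlabelledTree (m : ℕ) : Type := Quotient (treeSetoid m)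

/-- Alon's theorem on additive Latin transversals: for fewer than `char F` terms, any sequence `a`
and any distinct `d i` can be matched so that the sums are distinct. -/
theorem exists_perm_injective_add {F : Type*} [Field F] {n : ℕ} (a d : Fin n → F)
    (hd : Function.Injective d) (hn : (n.factorial : F) ≠ 0) :
    ∃ π : Equiv.Perm (Fin n), Function.Injective fun i => a i + d (π i) := by
  by_contra! hcon
  have hzero : ∀ π : Equiv.Perm (Fin n),
      (Matrix.vandermonde fun i => a i + d (π i)).det = 0 := by
    intro π
    by_contra h
    exact hcon π (Matrix.det_vandermonde_ne_zero_iff.mp h)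
  have hinner : ∀ σ : Equiv.Perm (Fin n),
      ∑ π : Equiv.Perm (Fin n), ((Equiv.Perm.sign π : ℤ) : F) *
        (((Equiv.Perm.sign σ : ℤ) : F) * ∏ i, (a (σ i) + d (π (σ i))) ^ (i : ℕ))
      = (Matrix.vandermonde d).det := by
    intro σ
    rw [Matrix.det_eval_matrixOfPolynomials_eq_det_vandermonde d
      (fun i => (Polynomial.X + Polynomial.C (a (σ i))) ^ (i : ℕ))
      (fun i => by simp [Polynomial.natDegree_pow]) (fun i => (Polynomial.monic_X_add_C _).pow _),
      Matrix.det_apply']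
    refine Fintype.sum_equiv (Equiv.mulRight σ) _ _ fun π => ?_
    simp only [Equiv.coe_mulRight, Equiv.Perm.sign_mul, Matrix.of_apply, Polynomial.eval_pow,
      Polynomial.eval_add, Polynomial.eval_X, Polynomial.eval_C, Equiv.Perm.coe_mul,
      Function.comp_apply, Units.val_mul, Int.cast_mul, mul_assoc]
    simp only [add_comm]
  have hsum : ∑ π : Equiv.Perm (Fin n), ((Equiv.Perm.sign π : ℤ) : F) *
      (Matrix.vandermonde fun i => a i + d (π i)).det
      = (n.factorial : F) * (Matrix.vandermonde d).det := by
    generalize (Matrix.vandermonde d).det = V at hinner ⊢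
    simp only [Matrix.det_apply' (Matrix.vandermonde _), Matrix.vandermonde_apply, Finset.mul_sum]
    rw [Finset.sum_comm]
    simp only [hinner]
    simp [Fintype.card_perm]
  simp only [hzero, mul_zero, Finset.sum_const_zero] at hsum
  rcases mul_eq_zero.mp hsum.symm with h | h
  · exact hn h
  · exact Matrix.det_vandermonde_ne_zero_iff.mpr hd h

/-- A rooted tree presented by the map sending each vertex to its parent; the root is its own
parent. -/
structure ParentTree (V : Type) where
  root : V
  par : V → V
  depth : V → ℕ
  par_root : par root = root
  depth_par : ∀ v, v ≠ root → depth (par v) < depth v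

namespace ParentTree

variable {V W : Type}

theorem par_ne (P : ParentTree V) {v : V} (hv : v ≠ P.root) : P.par v ≠ v := fun h => by
  have := P.depth_par v hv
  rw [h] at this
  exact lt_irrefl _ this

/-- The underlying graph of a rooted tree. -/
def graph (P : ParentTree V) : SimpleGraph V where
  Adj u v := u ≠ v ∧ (P.par u = v ∨ P.par v = u)
  symm := ⟨fun _ _ h => ⟨h.1.symm, h.2.symm⟩⟩
  loopless := ⟨fun _ h => h.1 rfl⟩

theorem graph_adj (P : ParentTree V) {u v : V} :
    P.graph.Adj u v ↔ u ≠ v ∧ (P.par u = v ∨ P.par v = u) := Iff.rfl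

theorem graph_adj_par (P : ParentTree V) {v : V} (hv : v ≠ P.root) : P.graph.Adj v (P.par v) :=
  ⟨(P.par_ne hv).symm, Or.inl rfl⟩

theorem ne_root_of_par_eq (P : ParentTree V) {u v : V} (h : P.par u = v) (huv : u ≠ v) :
    u ≠ P.root := by
  rintro rfl
  exact huv (P.par_root.symm.trans h)

theorem reachable_root (P : ParentTree V) (v : V) : P.graph.Reachable v P.root := by
  induction hn : P.depth v using Nat.strong_induction_on generalizing v with
  | _ n ih =>
    by_cases hv : v = P.root
    · rw [hv]
    · exact (P.graph_adj_par hv).reachable.trans (ih _ (hn ▸ P.depth_par v hv) _ rfl)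

theorem graph_connected (P : ParentTree V) : P.graph.Connected :=
  (SimpleGraph.connected_iff _).mpr
    ⟨fun u v => (P.reachable_root u).trans (P.reachable_root v).symm, ⟨P.root⟩⟩

/-- The edges of the underlying graph are the pairs of a non-root vertex and its parent. -/
noncomputable def edgeEquiv (P : ParentTree V) : {v : V // v ≠ P.root} ≃ P.graph.edgeSet :=
  Equiv.ofBijective (fun v => ⟨s(v.1, P.par v.1), P.graph_adj_par v.2⟩) <| by
    constructor
    · rintro ⟨u, hu⟩ ⟨v, hv⟩ h
      have h' : s(u, P.par u) = s(v, P.par v) := congrArg Subtype.val h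
      rcases Sym2.eq_iff.mp h' with ⟨h1, -⟩ | ⟨h1, h2⟩
      · exact Subtype.ext h1
      · have a1 := P.depth_par u hu
        have a2 := P.depth_par v hv
        rw [h2] at a1
        rw [← h1] at a2
        omega
    · rintro ⟨e, he⟩
      induction e using Sym2.ind with
      | _ u v =>
        have h : P.graph.Adj u v := he
        rcases h with ⟨hne, h | h⟩
        · exact ⟨⟨u, P.ne_root_of_par_eq h hne⟩, Subtype.ext (by simp [h])⟩
        · exact ⟨⟨v, P.ne_root_of_par_eq h hne.symm⟩, Subtype.ext (by simp [h, Sym2.eq_swap])⟩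

theorem card_edgeSet_add_one [Finite V] (P : ParentTree V) :
    Nat.card P.graph.edgeSet + 1 = Nat.card V := by
  classical
  have := Fintype.ofFinite V
  rw [← Nat.card_congr P.edgeEquiv, Nat.card_eq_fintype_card, Nat.card_eq_fintype_card,
    Fintype.card_subtype_compl, Fintype.card_subtype_eq]
  have : 0 < Fintype.card V := Fintype.card_pos_iff.mpr ⟨P.root⟩
  omega

theorem graph_isTree [Finite V] (P : ParentTree V) : P.graph.IsTree :=
  SimpleGraph.isTree_iff_connected_and_card.mpr ⟨P.graph_connected, P.card_edgeSet_add_one⟩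

theorem exists_graph_eq {G : SimpleGraph V} (hG : G.IsTree) : ∃ P : ParentTree V, P.graph = G := by
  classical
  obtain ⟨r⟩ := hG.connected.nonempty
  have hstep : ∀ v, ∃ w, v ≠ r → G.Adj v w ∧ G.dist w r < G.dist v r := by
    intro v
    by_cases hv : v = r
    · exact ⟨v, fun h => absurd hv h⟩
    · obtain ⟨p, hp⟩ := (hG.connected v r).exists_walk_length_eq_dist
      cases p with
      | nil => exact absurd rfl hv
      | cons h q =>
        refine ⟨_, fun _ => ⟨h, ?_⟩⟩
        rw [← hp]
        exact lt_of_le_of_lt (SimpleGraph.dist_le q) (by simp)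
  choose f hf using hstep
  refine ⟨⟨r, fun v => if v = r then r else f v, fun v => G.dist v r, by simp, fun v hv => ?_⟩, ?_⟩
  · simpa [hv] using (hf v hv).2
  · set P : ParentTree V := ⟨r, fun v => if v = r then r else f v, fun v => G.dist v r, _, _⟩
    have hpar : ∀ {u v : V}, P.par u = v → u ≠ v → G.Adj u v := by
      intro u v h huv
      have hu : u ≠ r := P.ne_root_of_par_eq h huv
      have : f u = v := by simpa [P, hu] using h
      exact this ▸ (hf u hu).1
    have hle : P.graph ≤ G := by
      rintro u v ⟨hne, h | h⟩
      · exact hpar h hne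
      · exact (hpar h hne.symm).symm
    exact le_antisymm hle
      ((SimpleGraph.isTree_iff_minimal_connected.mp hG).2 P.graph_connected hle)

/-- The vertices other than the root that have no child. -/
def leaves (P : ParentTree V) : Set V := {v | v ≠ P.root ∧ ∀ w, P.par w ≠ v}

/-- Isomorphism of rooted trees. -/
def Isom (P : ParentTree V) (Q : ParentTree W) : Prop :=
  ∃ e : V ≃ W, e P.root = Q.root ∧ ∀ v, e (P.par v) = Q.par (e v)

theorem Isom.graph_iso {P : ParentTree V} {Q : ParentTree W} :
    P.Isom Q → Nonempty (P.graph ≃g Q.graph) := fun ⟨e, _, hp⟩ =>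
  ⟨⟨e, by intro u v; simp only [graph_adj, ← hp, e.injective.eq_iff, ne_eq]⟩⟩

theorem isom_of_graph_iso {P : ParentTree V} {Q : ParentTree W} (e : P.graph ≃g Q.graph)
    (hr : e P.root = Q.root) : P.Isom Q := by
  refine ⟨e.toEquiv, hr, fun v => ?_⟩
  change e (P.par v) = Q.par (e v)
  induction hn : P.depth v using Nat.strong_induction_on generalizing v with
  | _ n ih =>
    by_cases hv : v = P.root
    · rw [hv, P.par_root, hr, Q.par_root]
    · have hadj : Q.graph.Adj (e v) (e (P.par v)) := e.map_adj_iff.mpr (P.graph_adj_par hv)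
      rcases hadj.2 with h | h
      · exact h.symm
      · rw [← ih _ (hn ▸ P.depth_par v hv) (P.par v) rfl] at h
        have h' := e.injective h
        by_cases hpv : P.par v = P.root
        · rw [hpv, P.par_root] at h'
          exact absurd h'.symm hv
        · have a1 := P.depth_par v hv
          have a2 := P.depth_par _ hpv
          rw [h'] at a2
          omega

end ParentTree

/-- A finite family of edges spanning fewer than `2 |W|` edges on every nonempty set `W` is
3-degenerate, hence 4-colourable. -/
theorem exists_four_colouring {V X : Type*} [DecidableEq X] [Fintype X] (E : Finset V)
    (s t : V → X) (hst : ∀ u ∈ E, s u ≠ t u)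
    (hE : ∀ W : Finset X, W.Nonempty → (E.filter fun u => s u ∈ W ∧ t u ∈ W).card < 2 * W.card) :
    ∃ c : X → Fin 4, ∀ u ∈ E, c (s u) ≠ c (t u) := by
  classical
  suffices h : ∀ W : Finset X, ∃ c : X → Fin 4, ∀ u ∈ E, s u ∈ W → t u ∈ W → c (s u) ≠ c (t u) by
    obtain ⟨c, hc⟩ := h Finset.univ
    exact ⟨c, fun u hu => hc u hu (Finset.mem_univ _) (Finset.mem_univ _)⟩
  intro W
  induction hn : W.card generalizing W with
  | zero =>
    rw [Finset.card_eq_zero] at hn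
    exact ⟨fun _ => 0, fun u _ h => by simp [hn] at h⟩
  | succ n ih =>
    have hW : W.Nonempty := Finset.card_pos.mp (by omega)
    set EW := E.filter fun u => s u ∈ W ∧ t u ∈ W with hEW
    obtain ⟨x, hxW, hx⟩ : ∃ x ∈ W, (EW.filter fun u => s u = x ∨ t u = x).card < 4 := by
      by_contra! hcon
      have h1 : W.card * 4 ≤ ∑ x ∈ W, (EW.filter fun u => s u = x ∨ t u = x).card := by
        rw [← smul_eq_mul]
        exact Finset.card_nsmul_le_sum _ _ _ hcon
      have h2 : ∑ x ∈ W, (EW.filter fun u => s u = x ∨ t u = x).card = EW.card * 2 := by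
        rw [← smul_eq_mul, ← Finset.sum_const]
        simp only [Finset.card_eq_sum_ones, Finset.sum_filter]
        rw [Finset.sum_comm]
        refine Finset.sum_congr rfl fun u hu => ?_
        obtain ⟨huE, hs, ht⟩ := Finset.mem_filter.mp hu
        rw [← Finset.sum_filter, ← Finset.card_eq_sum_ones]
        have : W.filter (fun x => s u = x ∨ t u = x) = {s u, t u} := by
          ext x
          simp only [Finset.mem_filter, Finset.mem_insert, Finset.mem_singleton]
          constructor
          · rintro ⟨-, h | h⟩
            · exact Or.inl h.symm
            · exact Or.inr h.symm
          · rintro (rfl | rfl)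
            · exact ⟨hs, Or.inl rfl⟩
            · exact ⟨ht, Or.inr rfl⟩
        rw [this, Finset.card_pair (hst u huE)]
      have h3 : EW.card < 2 * W.card := by convert hE W hW
      omega
    obtain ⟨c, hc⟩ := ih (W.erase x) (by rw [Finset.card_erase_of_mem hxW]; omega)
    obtain ⟨k, hk⟩ : ∃ k : Fin 4, k ∉ (EW.filter fun u => s u = x ∨ t u = x).image
        fun u => if s u = x then c (t u) else c (s u) := by
      by_contra! hcon
      have h1 := Finset.card_le_card (fun k _ => hcon k : Finset.univ ⊆ _)
      have h2 := h1.trans Finset.card_image_le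
      rw [Finset.card_univ, Fintype.card_fin] at h2
      omega
    refine ⟨Function.update c x k, fun u hu hs ht => ?_⟩
    have hkne : s u = x ∨ t u = x → k ≠ if s u = x then c (t u) else c (s u) := fun h he =>
      hk (Finset.mem_image.mpr ⟨u, by simp [hEW, hu, hs, ht, h], he.symm⟩)
    by_cases h1 : s u = x
    · have h2 : t u ≠ x := fun h => hst u hu (h1.trans h.symm)
      have := hkne (Or.inl h1)
      simp only [h1, if_true] at this
      rw [h1, Function.update_self, Function.update_of_ne h2]
      exact this
    · by_cases h2 : t u = x
      · have := hkne (Or.inr h2)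
        simp only [h1, if_false] at this
        rw [h2, Function.update_self, Function.update_of_ne h1]
        exact this.symm
      · rw [Function.update_of_ne h1, Function.update_of_ne h2]
        exact hc u hu (Finset.mem_erase.mpr ⟨h1, hs⟩) (Finset.mem_erase.mpr ⟨h2, ht⟩)

section Residues

variable {m : ℕ}

theorem residue_cases (x : ZMod (2 * m + 1)) (hx : x ≠ 0) :
    (x ≠ 0 ∧ x.val ≤ m) ∨ (-x ≠ 0 ∧ (-x).val ≤ m) := by
  by_cases h : x.val ≤ m
  · exact Or.inl ⟨hx, h⟩
  · refine Or.inr ⟨neg_ne_zero.mpr hx, ?_⟩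
    have : NeZero x := ⟨hx⟩
    rw [ZMod.val_neg_of_ne_zero]
    omega

theorem ne_neg_of_val_le {x y : ZMod (2 * m + 1)} (hx : x ≠ 0) (hxm : x.val ≤ m)
    (hym : y.val ≤ m) : x ≠ -y := by
  intro h
  have h0 : x + y = 0 := by rw [h, neg_add_cancel]
  have h1 := ZMod.val_add_of_lt (show x.val + y.val < 2 * m + 1 by omega)
  rw [h0, ZMod.val_zero] at h1
  exact hx ((ZMod.val_eq_zero x).mp (by omega))

theorem card_residues :
    (Finset.univ.filter fun x : ZMod (2 * m + 1) => x ≠ 0 ∧ x.val ≤ m).card = m := by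
  have : (Finset.univ.filter fun x : ZMod (2 * m + 1) => x ≠ 0 ∧ x.val ≤ m)
      = (Finset.Icc 1 m).image (fun k : ℕ => (k : ZMod (2 * m + 1))) := by
    ext x
    simp only [Finset.mem_filter, Finset.mem_univ, true_and, Finset.mem_image, Finset.mem_Icc]
    constructor
    · rintro ⟨h0, hm⟩
      refine ⟨x.val, ⟨?_, hm⟩, ZMod.natCast_zmod_val x⟩
      exact Nat.one_le_iff_ne_zero.mpr fun h => h0 ((ZMod.val_eq_zero x).mp h)
    · rintro ⟨k, ⟨h1, h2⟩, rfl⟩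
      have hv : (k : ZMod (2 * m + 1)).val = k := ZMod.val_cast_of_lt (by omega)
      refine ⟨fun h => ?_, by omega⟩
      rw [h, ZMod.val_zero] at hv
      omega
  rw [this, Finset.card_image_of_injOn, Nat.card_Icc, Nat.add_sub_cancel]
  intro a ha b hb hab
  simp only [Finset.coe_Icc, Set.mem_Icc] at ha hb
  have := congrArg ZMod.val hab
  rwa [ZMod.val_cast_of_lt (by omega), ZMod.val_cast_of_lt (by omega)] at this

end Residues

namespace ParentTree

variable {V : Type}

/-- Greedy rainbow embedding of a subtree `S` of at most about `2m/3` vertices into `ZMod (2m+1)`: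
the set `D` represents, up to sign, the differences that remain unused. -/
theorem exists_greedy_embedding [DecidableEq V] (P : ParentTree V) {m : ℕ} (S : Finset V)
    (hroot : P.root ∈ S) (hpar : ∀ v ∈ S, P.par v ∈ S) (hcard : 3 * S.card ≤ 2 * m + 4) :
    ∃ (φ : V → ZMod (2 * m + 1)) (D : Finset (ZMod (2 * m + 1))),
      Set.InjOn φ S ∧ D.card + S.card = m + 1 ∧ (∀ x ∈ D, x ≠ 0 ∧ x.val ≤ m) ∧
      ∀ x, x ≠ 0 → x ∈ D ∨ -x ∈ D ∨ ∃ u ∈ S, u ≠ P.root ∧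
        (x = φ u - φ (P.par u) ∨ -x = φ u - φ (P.par u)) := by
  induction hn : S.card generalizing S with
  | zero =>
    rw [Finset.card_eq_zero] at hn
    simp [hn] at hroot
  | succ n ih =>
    by_cases hS : S = {P.root}
    · refine ⟨fun _ => 0, Finset.univ.filter fun x => x ≠ 0 ∧ x.val ≤ m, ?_, ?_, ?_, ?_⟩
      · rw [hS]
        simp
      · rw [card_residues, ← hn, hS, Finset.card_singleton]
      · intro x hx
        simpa using hx
      · intro x hx
        rcases residue_cases x hx with h | h
        · exact Or.inl (by simpa using h)
        · exact Or.inr (Or.inl (by simpa using h))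
    · have hne : (S.erase P.root).Nonempty := by
        rw [Finset.nonempty_iff_ne_empty]
        intro h
        rw [Finset.erase_eq_empty_iff] at h
        rcases h with h | h
        · simp [h] at hroot
        · exact hS h
      obtain ⟨u, hu, hmax⟩ := Finset.exists_max_image _ P.depth hne
      obtain ⟨hur, huS⟩ := Finset.mem_erase.mp hu
      have hnotpar : ∀ v ∈ S, P.par v ≠ u := by
        intro v hv hvu
        have hvr : v ≠ P.root := by
          rintro rfl
          exact hur (hvu.symm.trans P.par_root)
        have h1 := hmax v (Finset.mem_erase.mpr ⟨hvr, hv⟩)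
        have h2 := P.depth_par v hvr
        rw [hvu] at h2
        omega
      have hcS : (S.erase u).card = n := by rw [Finset.card_erase_of_mem huS]; omega
      obtain ⟨φ, D, hinj, hD, hDm, hcov⟩ := ih (S.erase u)
        (Finset.mem_erase.mpr ⟨hur.symm, hroot⟩)
        (fun v hv => Finset.mem_erase.mpr
          ⟨hnotpar v (Finset.mem_of_mem_erase hv), hpar v (Finset.mem_of_mem_erase hv)⟩)
        (by omega) hcS
      set a := φ (P.par u) with ha
      have hcand : ((D.image fun d => a + d) ∪ (D.image fun d => a - d)).card = 2 * D.card := by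
        rw [Finset.card_union_of_disjoint, Finset.card_image_of_injective _ (add_right_injective a),
          Finset.card_image_of_injective _ (sub_right_injective)]
        · omega
        rw [Finset.disjoint_left]
        rintro x hx hx'
        obtain ⟨d, hd, rfl⟩ := Finset.mem_image.mp hx
        obtain ⟨d', hd', he⟩ := Finset.mem_image.mp hx'
        have : d = -d' := by
          have : a + -d' = a + d := by rw [← he, sub_eq_add_neg]
          exact (add_left_cancel this).symm
        exact ne_neg_of_val_le (hDm d hd).1 (hDm d hd).2 (hDm d' hd').2 this
      obtain ⟨x, hx, hxS⟩ : ∃ x ∈ (D.image fun d => a + d) ∪ (D.image fun d => a - d),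
          x ∉ (S.erase u).image φ := by
        by_contra! hcon
        have := (Finset.card_le_card hcon).trans Finset.card_image_le
        omega
      obtain ⟨d, hd, hxd⟩ : ∃ d ∈ D, x = a + d ∨ x = a - d := by
        rcases Finset.mem_union.mp hx with h | h
        · obtain ⟨d, hd, rfl⟩ := Finset.mem_image.mp h
          exact ⟨d, hd, Or.inl rfl⟩
        · obtain ⟨d, hd, rfl⟩ := Finset.mem_image.mp h
          exact ⟨d, hd, Or.inr rfl⟩
      have hpu : P.par u ≠ u := P.par_ne hur
      have hux : (Function.update φ u x) u - (Function.update φ u x) (P.par u) = x - a := by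
        rw [Function.update_self, Function.update_of_ne hpu]
      refine ⟨Function.update φ u x, D.erase d, ?_, ?_, ?_, ?_⟩
      · intro v hv w hw hvw
        by_cases hvu : v = u <;> by_cases hwu : w = u
        · rw [hvu, hwu]
        · rw [hvu, Function.update_self, Function.update_of_ne hwu] at hvw
          exact absurd (Finset.mem_image.mpr ⟨w, Finset.mem_erase.mpr ⟨hwu, hw⟩, hvw.symm⟩) hxS
        · rw [hwu, Function.update_self, Function.update_of_ne hvu] at hvw
          exact absurd (Finset.mem_image.mpr ⟨v, Finset.mem_erase.mpr ⟨hvu, hv⟩, hvw⟩) hxS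
        · rw [Function.update_of_ne hvu, Function.update_of_ne hwu] at hvw
          exact hinj (Finset.mem_coe.mpr (Finset.mem_erase.mpr ⟨hvu, hv⟩))
            (Finset.mem_coe.mpr (Finset.mem_erase.mpr ⟨hwu, hw⟩)) hvw
      · rw [Finset.card_erase_of_mem hd]
        have := Finset.card_pos.mpr ⟨d, hd⟩
        omega
      · exact fun y hy => hDm y (Finset.mem_of_mem_erase hy)
      · intro y hy
        by_cases hyd : y = d
        · refine Or.inr (Or.inr ⟨u, huS, hur, ?_⟩)
          rw [hux, hyd]
          rcases hxd with h | h <;> simp [h]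
        by_cases hyd' : -y = d
        · refine Or.inr (Or.inr ⟨u, huS, hur, ?_⟩)
          rw [hux]
          rcases hxd with h | h <;> simp [h, ← hyd']
        rcases hcov y hy with h | h | ⟨v, hv, hvr, h⟩
        · exact Or.inl (Finset.mem_erase.mpr ⟨hyd, h⟩)
        · exact Or.inr (Or.inl (Finset.mem_erase.mpr ⟨hyd', h⟩))
        · have hvS := Finset.mem_of_mem_erase hv
          refine Or.inr (Or.inr ⟨v, hvS, hvr, ?_⟩)
          rwa [Function.update_of_ne (Finset.ne_of_mem_erase hv),
            Function.update_of_ne (hnotpar v hvS)]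

/-- If at least a third of the vertices are leaves, the tree minus a leaf `x₀` maps to
`ZMod (2m+1)`, hitting every nonzero difference up to sign, with fibres separated by a map
to `{0, 1} ⊆ ZMod 3`, and with a 4-coloured image. -/
theorem exists_base_embedding [Fintype V] (P : ParentTree V) {m : ℕ} (hp : (2 * m + 1).Prime)
    (hV : Fintype.card V = m + 2) (hL : m + 2 ≤ 3 * P.leaves.ncard) {x₀ : V}
    (hx₀ : x₀ ∈ P.leaves) :
    ∃ (φ : V → ZMod (2 * m + 1)) (c : ZMod (2 * m + 1) → Fin 4) (γ : V → ZMod 3),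
      (∀ u, u ≠ x₀ → u ≠ P.root → φ u ≠ φ (P.par u)) ∧
      (∀ u, u ≠ x₀ → u ≠ P.root → c (φ u) ≠ c (φ (P.par u))) ∧
      (∀ u v, u ≠ x₀ → v ≠ x₀ → φ u = φ v → γ u = γ v → u = v) ∧
      (∀ u, γ u ≠ -1) ∧ γ (P.par x₀) = 0 ∧
      ∀ x, x ≠ 0 → ∃ u, u ≠ x₀ ∧ u ≠ P.root ∧
        (x = φ u - φ (P.par u) ∨ -x = φ u - φ (P.par u)) := by
  classical
  have : Fact (2 * m + 1).Prime := ⟨hp⟩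
  have hm : 1 ≤ m := by have := hp.two_le; omega
  set L : Finset V := Finset.univ.filter (· ∈ P.leaves) with hLdef
  have hLcard : L.card = P.leaves.ncard := by
    rw [← Set.ncard_coe_finset]
    congr 1
    ext v
    simp [L]
  have hmemL : ∀ v, v ∈ L ↔ v ∈ P.leaves := fun v => by simp [L]
  have hparL : ∀ v, P.par v ∉ L := fun v h => ((hmemL _).mp h).2 v rfl
  have hLc : Lᶜ.card + L.card = m + 2 := by rw [Finset.card_compl_add_card, hV]
  obtain ⟨φ, D, hinj, hD, hDm, hcov⟩ := P.exists_greedy_embedding (m := m) Lᶜ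
    (by rw [Finset.mem_compl, hmemL]; exact fun h => h.1 rfl)
    (fun v _ => Finset.mem_compl.mpr (hparL v)) (by omega)
  set L' := L.erase x₀ with hL'
  have hL'card : L'.card = D.card := by
    rw [Finset.card_erase_of_mem ((hmemL _).mpr hx₀)]
    omega
  have hparL' : ∀ v, P.par v ∉ L' := fun v h => hparL v (Finset.mem_of_mem_erase h)
  have hBpos : 0 < Lᶜ.card := Finset.card_pos.mpr ⟨P.par x₀, Finset.mem_compl.mpr (hparL x₀)⟩
  let eL : L' ≃ Fin D.card := L'.equivFinOfCardEq hL'card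
  let eD : D ≃ Fin D.card := D.equivFin
  obtain ⟨π, hπ⟩ := exists_perm_injective_add (fun i => φ (P.par (eL.symm i).1))
    (fun i => (eD.symm i).1) (Subtype.val_injective.comp eD.symm.injective) (by
      rw [Ne, ZMod.natCast_eq_zero_iff, hp.dvd_factorial]
      omega)
  set ψ : V → ZMod (2 * m + 1) := fun u =>
    if h : u ∈ L' then φ (P.par u) + (eD.symm (π (eL ⟨u, h⟩))).1 else φ u with hψ
  have hψL : ∀ u (h : u ∈ L'), ψ u = φ (P.par u) + (eD.symm (π (eL ⟨u, h⟩))).1 := fun u h => by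
    simp only [hψ, h, dif_pos]
  have hψB : ∀ u, u ∉ L' → ψ u = φ u := fun u h => by
    simp only [hψ, h, dif_neg, not_false_eq_true]
  have hψpar : ∀ u, ψ (P.par u) = φ (P.par u) := fun u => hψB _ (hparL' u)
  have hBmem : ∀ u, u ≠ x₀ → u ∉ L' → u ∈ Lᶜ := fun u h1 h2 =>
    Finset.mem_compl.mpr fun h => h2 (Finset.mem_erase.mpr ⟨h1, h⟩)
  have hne : ∀ u, u ≠ x₀ → u ≠ P.root → ψ u ≠ ψ (P.par u) := by
    intro u hu hur he
    rw [hψpar] at he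
    by_cases h : u ∈ L'
    · rw [hψL u h] at he
      exact (hDm _ (eD.symm (π (eL ⟨u, h⟩))).2).1 (add_eq_left.mp he)
    · rw [hψB u h] at he
      exact P.par_ne hur (hinj (Finset.mem_coe.mpr (hBmem u hu h))
        (Finset.mem_coe.mpr (Finset.mem_compl.mpr (hparL u))) he).symm
  set γ : V → ZMod 3 := fun u => if u ∈ L' then 1 else 0 with hγ
  have h01 : (1 : ZMod 3) ≠ 0 := by decide
  have hsep : ∀ u v, u ≠ x₀ → v ≠ x₀ → ψ u = ψ v → γ u = γ v → u = v := by
    intro u v hu hv h1 h2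
    by_cases hu' : u ∈ L' <;> by_cases hv' : v ∈ L'
    · rw [hψL u hu', hψL v hv'] at h1
      have := @hπ (eL ⟨u, hu'⟩) (eL ⟨v, hv'⟩) (by simpa using h1)
      simpa using this
    · simp [hγ, hu', hv'] at h2
    · simp [hγ, hu', hv'] at h2
    · rw [hψB u hu', hψB v hv'] at h1
      exact hinj (Finset.mem_coe.mpr (hBmem u hu hu')) (Finset.mem_coe.mpr (hBmem v hv hv')) h1
  obtain ⟨c, hc⟩ := exists_four_colouring (Finset.univ.filter fun u => u ≠ x₀ ∧ u ≠ P.root) ψ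
    (fun u => ψ (P.par u)) (fun u hu => by
      obtain ⟨-, h1, h2⟩ := Finset.mem_filter.mp hu
      exact hne u h1 h2) (by
    intro W hW
    set F := Finset.univ.filter fun u => u ≠ x₀ ∧ ψ u ∈ W with hF
    have hF2 : F.card ≤ 2 * W.card := by
      refine Finset.card_le_mul_card_image_of_maps_to (f := ψ)
        (fun a ha => (Finset.mem_filter.mp ha).2.2) 2 fun b _ => ?_
      calc (F.filter fun a => ψ a = b).card ≤ ({0, 1} : Finset (ZMod 3)).card := by
            refine Finset.card_le_card_of_injOn γ (fun a _ => ?_) fun a ha a' ha' h => ?_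
            · simp only [hγ]
              split_ifs <;> simp
            · have ha := Finset.mem_filter.mp (Finset.mem_coe.mp ha)
              have ha' := Finset.mem_filter.mp (Finset.mem_coe.mp ha')
              exact hsep a a' (Finset.mem_filter.mp ha.1).2.1 (Finset.mem_filter.mp ha'.1).2.1
                (ha.2.trans ha'.2.symm) h
        _ ≤ 2 := Finset.card_le_two
    have hWpos := hW.card_pos
    rcases F.eq_empty_or_nonempty with hFe | hFne
    · refine lt_of_le_of_lt (b := 0) ?_ (by omega)
      rw [Nat.le_zero, Finset.card_eq_zero, Finset.eq_empty_iff_forall_notMem]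
      intro u hu
      simp only [Finset.mem_filter, Finset.mem_univ, true_and] at hu
      exact Finset.notMem_empty u (hFe ▸ Finset.mem_filter.mpr ⟨Finset.mem_univ _, hu.1.1, hu.2.1⟩)
    · obtain ⟨r, hrF, hrmin⟩ := Finset.exists_min_image F P.depth hFne
      refine lt_of_lt_of_le (Finset.card_lt_card ?_) hF2
      refine Finset.ssubset_iff_subset_ne.mpr ⟨fun u hu => ?_, fun he => ?_⟩
      · simp only [Finset.mem_filter, Finset.mem_univ, true_and] at hu
        exact Finset.mem_filter.mpr ⟨Finset.mem_univ _, hu.1.1, hu.2.1⟩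
      · rw [← he] at hrF
        simp only [Finset.mem_filter, Finset.mem_univ, true_and] at hrF
        have h1 := hrmin (P.par r) (Finset.mem_filter.mpr
          ⟨Finset.mem_univ _, hx₀.2 r, hrF.2.2⟩)
        have h2 := P.depth_par r hrF.1.2
        omega)
  refine ⟨ψ, c, γ, hne, fun u h1 h2 => hc u (by simp [h1, h2]), hsep, ?_, ?_, ?_⟩
  · intro u
    simp only [hγ]
    split_ifs <;> decide
  · simp only [hγ, hparL' x₀, if_false]
  · have hDcov : ∀ x ∈ D, ∃ u, u ≠ x₀ ∧ u ≠ P.root ∧ x = ψ u - ψ (P.par u) := by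
      intro x hx
      set u := eL.symm (π.symm (eD ⟨x, hx⟩)) with hu
      refine ⟨u.1, Finset.ne_of_mem_erase u.2,
        ((hmemL _).mp (Finset.mem_of_mem_erase u.2)).1, ?_⟩
      rw [hψpar, hψL u.1 u.2]
      simp [hu]
    intro x hx
    rcases hcov x hx with h | h | ⟨u, hu, hur, h⟩
    · obtain ⟨u, h1, h2, h3⟩ := hDcov x h
      exact ⟨u, h1, h2, Or.inl h3⟩
    · obtain ⟨u, h1, h2, h3⟩ := hDcov (-x) h
      exact ⟨u, h1, h2, Or.inr h3⟩
    · have huL : u ∉ L := Finset.mem_compl.mp hu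
      refine ⟨u, fun h => huL (h ▸ (hmemL _).mpr hx₀), hur, ?_⟩
      rwa [hψpar, hψB u fun h => huL (Finset.mem_of_mem_erase h)]

end ParentTree

section Decomposes

variable {α β : Type} {H : SimpleGraph α} {G : SimpleGraph β}

theorem Decomposes.congr_right {β' : Type} {G' : SimpleGraph β'} (h : Decomposes H G)
    (e : G ≃g G') : Decomposes H G' := by
  obtain ⟨ι, f, hinj, hhom, hcov⟩ := h
  refine ⟨ι, fun i a => e (f i a), fun i => e.injective.comp (hinj i),
    fun i a b hab => e.map_adj_iff.mpr (hhom i a b hab), fun d hd => ?_⟩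
  have hmem : Sym2.map e.symm d ∈ G.edgeSet := by
    induction d using Sym2.ind with
    | _ x y => exact e.symm.map_adj_iff.mpr hd
  have key : ∀ (i : ι) (q : Sym2 α),
      Sym2.map (fun a => e (f i a)) q = d ↔ Sym2.map (f i) q = Sym2.map e.symm d := by
    intro i q
    rw [show (fun a => e (f i a)) = e ∘ f i from rfl, ← Sym2.map_map]
    constructor
    · rintro rfl
      rw [Sym2.map_map, show (e.symm ∘ e : β → β) = id from funext fun x => by simp, Sym2.map_id]
      rfl
    · intro h
      rw [h, Sym2.map_map, show (e ∘ e.symm : β' → β') = id from funext fun x => by simp,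
        Sym2.map_id]
      rfl
  simp only [key]
  exact hcov _ hmem

/-- If copies of `H` cover all edges of `G` and their number is right, they decompose `G`. -/
theorem decomposes_of_cover [Finite α] [Finite β] {ι : Type} [Finite ι] (f : ι → α → β)
    (hinj : ∀ i, Function.Injective (f i))
    (hhom : ∀ i a b, H.Adj a b → G.Adj (f i a) (f i b))
    (hcov : ∀ x y, G.Adj x y → ∃ i a b, H.Adj a b ∧ s(f i a, f i b) = s(x, y))
    (hcard : Nat.card ι * Nat.card H.edgeSet ≤ Nat.card G.edgeSet) : Decomposes H G := by
  have hmap : ∀ (i : ι) (q : Sym2 α), q ∈ H.edgeSet → Sym2.map (f i) q ∈ G.edgeSet := by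
    intro i q hq
    induction q using Sym2.ind with
    | _ x y => exact hhom i x y hq
  let Φ : ι × H.edgeSet → G.edgeSet := fun q => ⟨Sym2.map (f q.1) q.2.1, hmap q.1 _ q.2.2⟩
  have hΦ : Function.Surjective Φ := by
    rintro ⟨e, he⟩
    induction e using Sym2.ind with
    | _ x y =>
      obtain ⟨i, a, b, hab, h⟩ := hcov x y he
      exact ⟨(i, ⟨s(a, b), hab⟩), Subtype.ext h⟩
  have hbij : Function.Bijective Φ := hΦ.bijective_of_nat_card_le (by rwa [Nat.card_prod])
  refine ⟨ι, f, hinj, hhom, fun e he => ?_⟩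
  obtain ⟨⟨i, q⟩, hq⟩ := hΦ ⟨e, he⟩
  refine ⟨(i, q.1), ⟨q.2, congrArg Subtype.val hq⟩, ?_⟩
  rintro ⟨i', q'⟩ ⟨h1, h2⟩
  have : Φ (i', ⟨q', h1⟩) = Φ (i, q) := by
    rw [hq]
    exact Subtype.ext h2
  have := hbij.1 this
  simp only [Prod.mk.injEq] at this ⊢
  exact ⟨this.1, congrArg Subtype.val this.2⟩

theorem card_edgeSet_top_deleteEdges [Fintype β] {a b : β} (hab : a ≠ b) :
    Nat.card ((⊤ : SimpleGraph β).deleteEdges {s(a, b)}).edgeSet + 1 =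
      (Fintype.card β).choose 2 := by
  classical
  rw [SimpleGraph.edgeSet_deleteEdges, Nat.card_coe_set_eq,
    Set.ncard_sdiff_singleton_add_one (by simpa using hab),
    ← SimpleGraph.card_edgeFinset_top_eq_card_choose_two, ← SimpleGraph.coe_edgeFinset,
    Set.ncard_coe_finset]

/-- Any two complete graphs of the same order, minus an edge each, are isomorphic. -/
theorem nonempty_iso_top_deleteEdges {β' : Type} (e : β ≃ β') {a b : β} {a' b' : β'}
    (hab : a ≠ b) (hab' : a' ≠ b') :
    Nonempty ((⊤ : SimpleGraph β).deleteEdges {s(a, b)} ≃g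
      (⊤ : SimpleGraph β').deleteEdges {s(a', b')}) := by
  classical
  let e₁ : β ≃ β' := e.trans (Equiv.swap (e a) a')
  have h1 : e₁ a = a' := by simp [e₁]
  let e₂ : β ≃ β' := e₁.trans (Equiv.swap (e₁ b) b')
  have h2 : e₂ b = b' := by simp [e₂]
  have h3 : e₂ a = a' := by
    have h4 : a' ≠ e₁ b := h1 ▸ e₁.injective.ne hab
    simp only [e₂, Equiv.trans_apply, h1]
    exact Equiv.swap_apply_of_ne_of_ne h4 hab'
  refine ⟨⟨e₂, fun {x y} => ?_⟩⟩
  simp only [SimpleGraph.deleteEdges_adj, SimpleGraph.top_adj, Set.mem_singleton_iff, ← h2, ← h3,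
    Sym2.eq_iff, e₂.injective.eq_iff, ne_eq]

end Decomposes

/-- Four pairwise independent linear forms on `ZMod 3 × ZMod 3`. -/
def planeForm (k : Fin 4) (i j : ZMod 3) : ZMod 3 := ![i, j, i + j, i + 2 * j] k

theorem exists_planeForm_eq : ∀ k k' : Fin 4, k ≠ k' → ∀ a a' : ZMod 3,
    ∃ i j, planeForm k i j = a ∧ planeForm k' i j = a' := by
  decide

namespace ParentTree

variable {V : Type}

theorem decomposes_sum [Fintype V] (P : ParentTree V) {m : ℕ} (hp : (2 * m + 1).Prime)
    (hV : Fintype.card V = m + 2) (hL : m + 2 ≤ 3 * P.leaves.ncard) :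
    Decomposes P.graph ((⊤ : SimpleGraph ((ZMod (2 * m + 1) × ZMod 3) ⊕ Bool)).deleteEdges
      {s(Sum.inr false, Sum.inr true)}) := by
  classical
  obtain ⟨x₀, hx₀⟩ : P.leaves.Nonempty := by
    rw [← Set.ncard_pos]
    omega
  obtain ⟨φ, c, γ, hne, hc, hsep, hγ, hγ₀, hdiff⟩ := P.exists_base_embedding hp hV hL hx₀
  set v₀ := P.par x₀ with hv₀
  have hv₀x : v₀ ≠ x₀ := hx₀.2 x₀
  set k₀ := c (φ v₀) with hk₀
  have hk : k₀ ≠ k₀ + 1 := by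
    generalize k₀ = k
    revert k
    decide
  let apex (t : ZMod (2 * m + 1)) (a b : ZMod 3) : (ZMod (2 * m + 1) × ZMod 3) ⊕ Bool :=
    if b = 0 then Sum.inl (φ v₀ + t, a - 1) else Sum.inr (decide (b = 1))
  let f : ZMod (2 * m + 1) × ZMod 3 × ZMod 3 → V → (ZMod (2 * m + 1) × ZMod 3) ⊕ Bool :=
    fun q v => if v = x₀ then apex q.1 (planeForm k₀ q.2.1 q.2.2) (planeForm (k₀ + 1) q.2.1 q.2.2)
      else Sum.inl (φ v + q.1, planeForm (c (φ v)) q.2.1 q.2.2 + γ v)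
  have hf : ∀ q v, v ≠ x₀ → f q v =
      Sum.inl (φ v + q.1, planeForm (c (φ v)) q.2.1 q.2.2 + γ v) := fun q v h => by
    simp only [f, h, if_false]
  have hf₀ : ∀ q, f q x₀ =
      apex q.1 (planeForm k₀ q.2.1 q.2.2) (planeForm (k₀ + 1) q.2.1 q.2.2) := fun q => by
    simp only [f, if_true]
  have hfx : ∀ q v, v ≠ x₀ → f q v ≠ f q x₀ := by
    intro q v hv h
    rw [hf q v hv, hf₀] at h
    by_cases hb : planeForm (k₀ + 1) q.2.1 q.2.2 = 0
    · simp only [apex, hb, if_true, Sum.inl.injEq, Prod.mk.injEq, add_left_inj] at h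
      obtain ⟨h1, h2⟩ := h
      rw [h1, sub_eq_add_neg] at h2
      exact hγ v (add_left_cancel h2)
    · simp [apex, hb] at h
  have hinj : ∀ q, Function.Injective (f q) := by
    intro q u v h
    by_cases hu : u = x₀ <;> by_cases hv : v = x₀
    · rw [hu, hv]
    · exact absurd (hu ▸ h).symm (hfx q v hv)
    · exact absurd (hv ▸ h) (hfx q u hu)
    · rw [hf q u hu, hf q v hv] at h
      simp only [Sum.inl.injEq, Prod.mk.injEq, add_left_inj] at h
      obtain ⟨h1, h2⟩ := h
      rw [h1] at h2
      exact hsep u v hu hv h1 (add_left_cancel h2)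
  have hinr : ∀ q v b, f q v = Sum.inr b → v = x₀ := by
    intro q v b h
    by_contra hv
    rw [hf q v hv] at h
    cases h
  have hcovD : ∀ y y' a a' u, u ≠ x₀ → u ≠ P.root → y - y' = φ u - φ (P.par u) →
      ∃ q a₁ b₁, P.graph.Adj a₁ b₁ ∧ s(f q a₁, f q b₁) = s(Sum.inl (y, a), Sum.inl (y', a')) := by
    intro y y' a a' u hu hur h
    obtain ⟨i, j, h1, h2⟩ := exists_planeForm_eq _ _ (hc u hu hur) (a - γ u) (a' - γ (P.par u))
    refine ⟨(y - φ u, i, j), u, P.par u, P.graph_adj_par hur, ?_⟩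
    rw [hf _ u hu, hf _ (P.par u) (hx₀.2 u), h1, h2, sub_add_cancel, sub_add_cancel,
      add_sub_cancel, show φ (P.par u) + (y - φ u) = y' by linear_combination h]
  have hcov₀ : ∀ (y : ZMod (2 * m + 1)) (a b : ZMod 3), ∃ q a₁ b₁, P.graph.Adj a₁ b₁ ∧
      s(f q a₁, f q b₁) = s(Sum.inl (y, a),
        if b = 0 then Sum.inl (y, a - 1) else Sum.inr (decide (b = 1))) := by
    intro y a b
    obtain ⟨i, j, h1, h2⟩ := exists_planeForm_eq _ _ hk a b
    refine ⟨(y - φ v₀, i, j), v₀, x₀, (P.graph_adj_par hx₀.1).symm, ?_⟩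
    rw [hf _ v₀ hv₀x, hf₀]
    simp only [apex, ← hk₀, h1, h2, hγ₀, add_zero, add_sub_cancel]
  refine decomposes_of_cover f hinj ?_ ?_ ?_
  · intro q u v huv
    rw [SimpleGraph.deleteEdges_adj, SimpleGraph.top_adj, Set.mem_singleton_iff]
    refine ⟨(hinj q).ne huv.ne, fun h => ?_⟩
    rcases Sym2.eq_iff.mp h with ⟨h1, h2⟩ | ⟨h1, h2⟩ <;>
      exact huv.ne ((hinr _ _ _ h1).trans (hinr _ _ _ h2).symm)
  · have h3 : ∀ a a' : ZMod 3, a ≠ a' → a' = a - 1 ∨ a = a' - 1 := by decide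
    have hb : ∀ y a b, ∃ q a₁ b₁, P.graph.Adj a₁ b₁ ∧
        s(f q a₁, f q b₁) = s(Sum.inl (y, a), Sum.inr b) := by
      intro y a b
      cases b
      · exact hcov₀ y a 2
      · exact hcov₀ y a 1
    rintro (⟨y, a⟩ | b) (⟨y', a'⟩ | b') hadj
    · by_cases hy : y = y'
      · subst hy
        have haa : a ≠ a' := by
          rintro rfl
          exact hadj.ne rfl
        rcases h3 a a' haa with h | h
        · rw [h]
          simpa using hcov₀ y a 0
        · rw [h, Sym2.eq_swap]
          simpa using hcov₀ y a' 0
      · obtain ⟨u, h1, h2, h | h⟩ := hdiff (y - y') (sub_ne_zero.mpr hy)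
        · exact hcovD y y' a a' u h1 h2 h
        · rw [Sym2.eq_swap]
          exact hcovD y' y a' a u h1 h2 (by rw [← h, neg_sub])
    · exact hb y a b'
    · rw [Sym2.eq_swap]
      exact hb y' a' b
    · exfalso
      rw [SimpleGraph.deleteEdges_adj, SimpleGraph.top_adj, Set.mem_singleton_iff] at hadj
      cases b <;> cases b' <;> simp at hadj
  · have h1 := P.card_edgeSet_add_one
    have h2 := card_edgeSet_top_deleteEdges
      (show (Sum.inr false : (ZMod (2 * m + 1) × ZMod 3) ⊕ Bool) ≠ Sum.inr true by simp)
    rw [Nat.card_eq_fintype_card (α := V), hV] at h1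
    simp only [Fintype.card_sum, Fintype.card_prod, ZMod.card, Fintype.card_bool] at h2
    rw [Nat.choose_two_right] at h2
    simp only [Nat.card_prod, Nat.card_zmod]
    have h4 : ((2 * m + 1) * 3 + 2) * ((2 * m + 1) * 3 + 2 - 1) / 2 =
        (2 * m + 1) * 9 * (m + 1) + 1 := by
      rw [show ((2 * m + 1) * 3 + 2) * ((2 * m + 1) * 3 + 2 - 1) =
        ((2 * m + 1) * 9 * (m + 1) + 1) * 2 by
          rw [show (2 * m + 1) * 3 + 2 - 1 = 6 * m + 4 by omega]
          ring]
      exact Nat.mul_div_cancel _ (by norm_num)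
    rw [h4] at h2
    rw [show Nat.card P.graph.edgeSet = m + 1 by omega]
    have h5 : (2 * m + 1) * (3 * 3) * (m + 1) = (2 * m + 1) * 9 * (m + 1) := by ring
    omega

theorem decomposes_complete_minus_edge [Fintype V] (P : ParentTree V) {m : ℕ}
    (hp : (2 * m + 1).Prime) (hV : Fintype.card V = m + 2) (hL : m + 2 ≤ 3 * P.leaves.ncard)
    {a b : Fin (6 * m + 5)} (hab : a ≠ b) :
    Decomposes P.graph ((⊤ : SimpleGraph (Fin (6 * m + 5))).deleteEdges {s(a, b)}) := by
  have e : (ZMod (2 * m + 1) × ZMod 3) ⊕ Bool ≃ Fin (6 * m + 5) :=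
    Fintype.equivFinOfCardEq (by
      simp only [Fintype.card_sum, Fintype.card_prod, ZMod.card, Fintype.card_bool]
      ring)
  obtain ⟨g⟩ := nonempty_iso_top_deleteEdges e
    (show (Sum.inr false : (ZMod (2 * m + 1) × ZMod 3) ⊕ Bool) ≠ Sum.inr true by simp) hab
  exact (P.decomposes_sum hp hV hL).congr_right g

end ParentTree

/-! Rooted trees are coded by natural numbers following Matula: the number `c` codes the tree whose
principal subtrees are coded by the indices of the primes occurring in the factorisation of
`c + 1`. -/

namespace TreeCode

/-- The codes of the principal subtrees. -/
def kids (c : ℕ) : Multiset ℕ :=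
  Multiset.map (fun p => Nat.count Nat.Prime p) ((c + 1).primeFactorsList : Multiset ℕ)

/-- The code of the tree with given principal subtrees. -/
noncomputable def node (M : Multiset ℕ) : ℕ := (M.map fun k => Nat.nth Nat.Prime k).prod - 1

theorem count_nth_prime (k : ℕ) : Nat.count Nat.Prime (Nat.nth Nat.Prime k) = k :=
  Nat.count_nth_of_infinite Nat.infinite_setOfPred_prime k

theorem prod_nth_prime_kids (c : ℕ) : ((kids c).map fun k => Nat.nth Nat.Prime k).prod = c + 1 := by
  rw [kids, Multiset.map_map]
  have : Multiset.map ((fun k => Nat.nth Nat.Prime k) ∘ fun p => Nat.count Nat.Prime p)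
      ((c + 1).primeFactorsList : Multiset ℕ) = ((c + 1).primeFactorsList : Multiset ℕ) := by
    conv_rhs => rw [← Multiset.map_id ((c + 1).primeFactorsList : Multiset ℕ)]
    refine Multiset.map_congr rfl fun p hp => ?_
    exact Nat.nth_count (Nat.prime_of_mem_primeFactorsList (Multiset.mem_coe.mp hp))
  rw [this, Multiset.prod_coe, Nat.prod_primeFactorsList (Nat.succ_ne_zero c)]

theorem node_kids (c : ℕ) : node (kids c) = c := by
  rw [node, prod_nth_prime_kids, Nat.add_sub_cancel]

theorem kids_node (M : Multiset ℕ) : kids (node M) = M := by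
  have hpos : 0 < (M.map fun k => Nat.nth Nat.Prime k).prod := by
    refine Nat.pos_of_ne_zero fun h => ?_
    obtain ⟨k, -, hk⟩ := Multiset.mem_map.mp (Multiset.prod_eq_zero_iff.mp h)
    exact (Nat.prime_nth_prime k).ne_zero hk
  rw [kids, node, Nat.sub_add_cancel hpos]
  induction M using Quotient.inductionOn with
  | _ l =>
    have h := Nat.primeFactorsList_unique (n := (l.map fun k => Nat.nth Nat.Prime k).prod) rfl
      (fun p hp => by
        obtain ⟨k, -, rfl⟩ := List.mem_map.mp hp
        exact Nat.prime_nth_prime k)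
    simp only [Multiset.quot_mk_to_coe, Multiset.map_coe, Multiset.prod_coe]
    rw [← Multiset.map_coe, ← Multiset.coe_eq_coe.mpr h, Multiset.map_coe, List.map_map,
      show ((fun p => Nat.count Nat.Prime p) ∘ fun k => Nat.nth Nat.Prime k) = id from
        funext count_nth_prime, List.map_id]

theorem kids_injective : Function.Injective kids := Function.LeftInverse.injective node_kids

theorem node_injective : Function.Injective node := Function.LeftInverse.injective kids_node

theorem lt_of_mem_kids {c k : ℕ} (h : k ∈ kids c) : k < c := by
  have h1 : Nat.nth Nat.Prime k ∣ c + 1 := by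
    rw [← prod_nth_prime_kids c]
    exact Multiset.dvd_prod (Multiset.mem_map_of_mem _ h)
  have h2 := Nat.le_of_dvd (Nat.succ_pos c) h1
  have h3 := Nat.add_two_le_nth_prime k
  omega

theorem kids_zero : kids 0 = 0 := by
  refine Multiset.eq_zero_of_forall_notMem fun k hk => ?_
  exact absurd (lt_of_mem_kids hk) (Nat.not_lt_zero k)

theorem kids_eq_zero_iff {c : ℕ} : kids c = 0 ↔ c = 0 :=
  ⟨fun h => kids_injective (h.trans kids_zero.symm), fun h => h ▸ kids_zero⟩

theorem kids_one : kids 1 = {0} := by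
  have h : kids 1 ≠ 0 := fun h => absurd (kids_eq_zero_iff.mp h) one_ne_zero
  obtain ⟨k, hk⟩ := Multiset.exists_mem_of_ne_zero h
  have h1 := prod_nth_prime_kids 1
  obtain rfl : k = 0 := by
    have := lt_of_mem_kids hk
    omega
  obtain ⟨M, hM⟩ := Multiset.exists_cons_of_mem hk
  rw [hM, Multiset.map_cons, Multiset.prod_cons, Nat.nth_prime_zero_eq_two] at h1
  have h2 : kids (node M) = 0 := by
    rw [kids_eq_zero_iff, node]
    omega
  rw [kids_node] at h2
  rw [hM, h2]
  rfl

/-- The number of vertices of the tree coded by `c`. -/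
def verts (c : ℕ) : ℕ := 1 + ((kids c).attach.map fun k => verts k.1).sum
termination_by c
decreasing_by exact lt_of_mem_kids k.2

/-- The number of childless vertices of the tree coded by `c`. -/
def tips (c : ℕ) : ℕ := if c = 0 then 1 else ((kids c).attach.map fun k => tips k.1).sum
termination_by c
decreasing_by exact lt_of_mem_kids k.2

theorem verts_eq (c : ℕ) : verts c = 1 + ((kids c).map verts).sum := by
  rw [verts, Multiset.attach_map_val' (kids c) verts]

theorem tips_eq (c : ℕ) : tips c = if c = 0 then 1 else ((kids c).map tips).sum := by
  rw [tips, Multiset.attach_map_val' (kids c) tips]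

theorem verts_zero : verts 0 = 1 := by
  rw [verts_eq, kids_zero]
  rfl

theorem tips_zero : tips 0 = 1 := by
  rw [tips_eq, if_pos rfl]

theorem verts_one : verts 1 = 2 := by
  rw [verts_eq, kids_one, Multiset.map_singleton, Multiset.sum_singleton, verts_zero]

theorem tips_one : tips 1 = 1 := by
  rw [tips_eq, if_neg one_ne_zero, kids_one, Multiset.map_singleton, Multiset.sum_singleton,
    tips_zero]

theorem verts_pos (c : ℕ) : 1 ≤ verts c := by
  rw [verts_eq]
  omega

theorem tips_pos (c : ℕ) : 1 ≤ tips c := by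
  induction c using Nat.strong_induction_on with
  | _ c ih =>
    rw [tips_eq]
    split_ifs with h
    · exact le_rfl
    · obtain ⟨k, hk⟩ := Multiset.exists_mem_of_ne_zero (mt kids_eq_zero_iff.mp h)
      exact (ih k (lt_of_mem_kids hk)).trans
        (Multiset.single_le_sum (by simp) _ (Multiset.mem_map_of_mem _ hk))

theorem two_le_verts {c : ℕ} (hc : c ≠ 0) : 2 ≤ verts c := by
  obtain ⟨k, hk⟩ := Multiset.exists_mem_of_ne_zero (mt kids_eq_zero_iff.mp hc)
  rw [verts_eq]
  have := Multiset.single_le_sum (by simp) _ (Multiset.mem_map_of_mem verts hk)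
  have := verts_pos k
  omega

theorem three_le_verts {c : ℕ} (h0 : c ≠ 0) (h1 : c ≠ 1) : 3 ≤ verts c := by
  obtain ⟨k, hk⟩ := Multiset.exists_mem_of_ne_zero (mt kids_eq_zero_iff.mp h0)
  obtain ⟨M, hM⟩ := Multiset.exists_cons_of_mem hk
  rw [verts_eq, hM, Multiset.map_cons, Multiset.sum_cons]
  rcases Multiset.empty_or_exists_mem M with rfl | ⟨l, hl⟩
  · have hk0 : k ≠ 0 := by
      rintro rfl
      exact h1 (kids_injective (hM.trans kids_one.symm))
    have := two_le_verts hk0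
    omega
  · have := Multiset.single_le_sum (by simp) _ (Multiset.mem_map_of_mem verts hl)
    have := verts_pos k
    have := verts_pos l
    omega

end TreeCode

namespace ParentTree

open TreeCode

variable {V W : Type} [Fintype V] [Fintype W]

open scoped Classical in
/-- The children of a vertex. -/
noncomputable def children (P : ParentTree V) (v : V) : Finset V :=
  Finset.univ.filter fun w => w ≠ P.root ∧ P.par w = v

theorem mem_children {P : ParentTree V} {v w : V} :
    w ∈ P.children v ↔ w ≠ P.root ∧ P.par w = v := by
  simp [children]

/-- `g` assigns to every vertex the code of the subtree below it. -/
def IsCoding (P : ParentTree V) (g : V → ℕ) : Prop :=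
  ∀ v, kids (g v) = (P.children v).val.map g

theorem exists_isCoding (P : ParentTree V) : ∃ g, P.IsCoding g := by
  set D := Finset.univ.sup P.depth with hD
  have hle : ∀ v, P.depth v ≤ D := fun v => Finset.le_sup (Finset.mem_univ v)
  suffices h : ∀ h, ∃ g : V → ℕ, ∀ v, D - P.depth v < h →
      kids (g v) = (P.children v).val.map g by
    obtain ⟨g, hg⟩ := h (D + 1)
    exact ⟨g, fun v => hg v (by omega)⟩
  intro h
  induction h with
  | zero => exact ⟨fun _ => 0, fun v hv => absurd hv (Nat.not_lt_zero _)⟩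
  | succ h ih =>
    obtain ⟨g, hg⟩ := ih
    refine ⟨fun v => node ((P.children v).val.map g), fun v hv => ?_⟩
    rw [kids_node]
    refine Multiset.map_congr rfl fun w hw => ?_
    obtain ⟨hwr, hwv⟩ := mem_children.mp (Finset.mem_def.mpr hw)
    have h1 := P.depth_par w hwr
    have h2 := hle w
    rw [hwv] at h1
    rw [← hg w (by omega), node_kids]

theorem IsCoding.unique {P : ParentTree V} {g g' : V → ℕ} (hg : P.IsCoding g)
    (hg' : P.IsCoding g') : g = g' := by
  set D := Finset.univ.sup P.depth with hD
  have hle : ∀ v, P.depth v ≤ D := fun v => Finset.le_sup (Finset.mem_univ v)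
  funext v
  induction hn : D - P.depth v using Nat.strong_induction_on generalizing v with
  | _ n ih =>
    refine kids_injective ?_
    rw [hg v, hg' v]
    refine Multiset.map_congr rfl fun w hw => ?_
    obtain ⟨hwr, hwv⟩ := mem_children.mp (Finset.mem_def.mpr hw)
    have h1 := P.depth_par w hwr
    have h2 := hle w
    rw [hwv] at h1
    exact ih _ (by omega) w rfl

/-- The code of a rooted tree. -/
noncomputable def code (P : ParentTree V) : ℕ := P.exists_isCoding.choose P.root

theorem IsCoding.code_eq {P : ParentTree V} {g : V → ℕ} (hg : P.IsCoding g) :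
    P.code = g P.root :=
  congrFun (P.exists_isCoding.choose_spec.unique hg) P.root

theorem Isom.code_eq {P : ParentTree V} {Q : ParentTree W} (h : P.Isom Q) : P.code = Q.code := by
  obtain ⟨e, hr, hp⟩ := h
  obtain ⟨g, hg⟩ := Q.exists_isCoding
  have : P.IsCoding (g ∘ e) := by
    intro v
    have hc : (Q.children (e v)).val = (P.children v).val.map e := by
      have : Q.children (e v) = (P.children v).map e.toEmbedding := by
        ext w
        obtain ⟨u, rfl⟩ := e.surjective w
        rw [mem_children, ← hr, ← hp]
        simp [mem_children, e.injective.eq_iff]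
      rw [this]
      rfl
    rw [Function.comp_apply, hg (e v), hc, Multiset.map_map]
  rw [this.code_eq, hg.code_eq, Function.comp_apply, hr]

/-- Maps with the same multiset of values differ by a bijection. -/
theorem exists_bijOn_of_map_eq {V W γ : Type} [Inhabited W] {A : Finset V} {B : Finset W}
    {g : V → γ} {g' : W → γ} (h : A.val.map g = B.val.map g') :
    ∃ s : V → W, Set.BijOn s A B ∧ ∀ v ∈ A, g' (s v) = g v := by
  classical
  have hfib : ∀ c, Nonempty ({a : A // g a = c} ≃ {b : B // g' b = c}) := by
    intro c
    refine ⟨Fintype.equivOfCardEq ?_⟩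
    have hc := congrArg (Multiset.count c) h
    have key : ∀ {U : Type} (C : Finset U) (k : U → γ),
        Multiset.count c (C.val.map k) = Fintype.card {a : C // k a = c} := by
      intro U C k
      rw [Multiset.count_map, Fintype.card_subtype, ← Finset.filter_val, Finset.card_val]
      simp only [eq_comm (a := c)]
      rw [← Finset.card_map (Function.Embedding.subtype (· ∈ C))]
      congr 1
      ext x
      simp [and_comm]
    rw [← key, ← key, hc]
  let e : A ≃ B := Equiv.ofFiberEquiv fun c => (hfib c).some
  have he : ∀ a : A, g' (e a) = g a := fun a =>
    Equiv.ofFiberEquiv_map (f := fun a : A => g a) (g := fun b : B => g' b) _ a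
  refine ⟨fun v => if hv : v ∈ A then e ⟨v, hv⟩ else default, ⟨fun v hv => ?_, ?_, ?_⟩, ?_⟩
  · simp [Finset.mem_coe.mp hv]
  · intro u hu v hv huv
    simpa [Finset.mem_coe.mp hu, Finset.mem_coe.mp hv] using huv
  · intro w hw
    refine ⟨e.symm ⟨w, hw⟩, (e.symm ⟨w, hw⟩).2, by simp⟩
  · intro v hv
    simpa [hv] using he ⟨v, hv⟩

theorem isom_of_code_eq {P : ParentTree V} {Q : ParentTree W} (h : P.code = Q.code) :
    P.Isom Q := by
  classical
  obtain ⟨g, hg⟩ := P.exists_isCoding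
  obtain ⟨g', hg'⟩ := Q.exists_isCoding
  rw [hg.code_eq, hg'.code_eq] at h
  have : Inhabited W := ⟨Q.root⟩
  have hs : ∀ v w, ∃ s : V → W, g v = g' w →
      Set.BijOn s (P.children v) (Q.children w) ∧ ∀ u ∈ P.children v, g' (s u) = g u := by
    intro v w
    by_cases hvw : g v = g' w
    · obtain ⟨s, hs⟩ := exists_bijOn_of_map_eq (A := P.children v) (B := Q.children w)
        (g := g) (g' := g') (by rw [← hg, ← hg', hvw])
      exact ⟨s, fun _ => hs⟩
    · exact ⟨fun _ => Q.root, fun h => absurd h hvw⟩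
  choose s hs using hs
  obtain ⟨f, hroot, hstep⟩ : ∃ f : V → W, f P.root = Q.root ∧
      ∀ v, v ≠ P.root → f v = s (P.par v) (f (P.par v)) v := by
    let F : (v : V) → ((u : V) → P.depth u < P.depth v → W) → W := fun v ih =>
      if hv : v = P.root then Q.root else s (P.par v) (ih (P.par v) (P.depth_par v hv)) v
    refine ⟨(measure P.depth).wf.fix F, ?_, fun v hv => ?_⟩
    · rw [WellFounded.fix_eq]
      simp [F]
    · rw [WellFounded.fix_eq]
      simp [F, hv]
  have hcode : ∀ v, g v = g' (f v) := by
    intro v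
    induction hn : P.depth v using Nat.strong_induction_on generalizing v with
    | _ n ih =>
      by_cases hv : v = P.root
      · rw [hv, hroot, h]
      · have h1 := ih _ (hn ▸ P.depth_par v hv) (P.par v) rfl
        rw [hstep v hv]
        exact ((hs _ _ h1).2 v (mem_children.mpr ⟨hv, rfl⟩)).symm
  have hbij : ∀ v, Set.BijOn (s v (f v)) (P.children v) (Q.children (f v)) := fun v =>
    (hs v (f v) (hcode v)).1
  have hmem : ∀ v, v ≠ P.root → f v ≠ Q.root ∧ Q.par (f v) = f (P.par v) := by
    intro v hv
    have := (hbij (P.par v)).1 (Finset.mem_coe.mpr (mem_children.mpr ⟨hv, rfl⟩))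
    rw [← hstep v hv] at this
    exact mem_children.mp (Finset.mem_coe.mp this)
  have hinj : Function.Injective f := by
    intro u v huv
    induction hn : P.depth u using Nat.strong_induction_on generalizing u v with
    | _ n ih =>
      by_cases hu : u = P.root <;> by_cases hv : v = P.root
      · rw [hu, hv]
      · exact absurd (by rw [← huv, hu, hroot]) (hmem v hv).1
      · exact absurd (by rw [huv, hv, hroot]) (hmem u hu).1
      · have h1 : P.par u = P.par v :=
          ih _ (hn ▸ P.depth_par u hu) (by rw [← (hmem u hu).2, ← (hmem v hv).2, huv]) rfl
        refine (hbij (P.par u)).2.1 (Finset.mem_coe.mpr (mem_children.mpr ⟨hu, rfl⟩))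
          (Finset.mem_coe.mpr (mem_children.mpr ⟨hv, h1.symm⟩)) ?_
        rw [← hstep u hu, h1, ← hstep v hv, huv]
  have hsurj : Function.Surjective f := by
    intro w
    induction hn : Q.depth w using Nat.strong_induction_on generalizing w with
    | _ n ih =>
      by_cases hw : w = Q.root
      · exact ⟨P.root, hroot.trans hw.symm⟩
      · obtain ⟨v, hv⟩ := ih _ (hn ▸ Q.depth_par w hw) (Q.par w) rfl
        obtain ⟨u, hu, huw⟩ := (hbij v).2.2 (Finset.mem_coe.mpr (mem_children.mpr ⟨hw, hv.symm⟩))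
        obtain ⟨hur, rfl⟩ := mem_children.mp (Finset.mem_coe.mp hu)
        exact ⟨u, (hstep u hur).trans huw⟩
  refine ⟨Equiv.ofBijective f ⟨hinj, hsurj⟩, hroot, fun v => ?_⟩
  by_cases hv : v = P.root
  · rw [hv, P.par_root]
    change f P.root = Q.par (f P.root)
    rw [hroot, Q.par_root]
  · exact (hmem v hv).2.symm

/-- A quantity determined by a local increment at each vertex is the sum of the increments. -/
theorem root_eq_sum_of_local (P : ParentTree V) (F ε : V → ℕ)
    (h : ∀ v, F v = ε v + ∑ w ∈ P.children v, F w) : F P.root = ∑ v, ε v := by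
  classical
  have h1 : ∑ v, F v = ∑ v, ε v + ∑ v, ∑ w ∈ P.children v, F w := by
    rw [← Finset.sum_add_distrib]
    exact Finset.sum_congr rfl fun v _ => h v
  have h2 : ∑ v, ∑ w ∈ P.children v, F w = ∑ w ∈ Finset.univ.erase P.root, F w := by
    rw [← Finset.sum_fiberwise_of_maps_to (s := Finset.univ.erase P.root) (g := P.par)
      (t := Finset.univ) (fun _ _ => Finset.mem_univ _)]
    refine Finset.sum_congr rfl fun v _ => Finset.sum_congr ?_ fun _ _ => rfl
    ext w
    simp [mem_children]
  have h3 := Finset.add_sum_erase Finset.univ F (Finset.mem_univ P.root)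
  omega

theorem verts_code (P : ParentTree V) : verts P.code = Fintype.card V := by
  obtain ⟨g, hg⟩ := P.exists_isCoding
  rw [hg.code_eq, P.root_eq_sum_of_local (fun v => verts (g v)) (fun _ => 1), Finset.sum_const,
    Finset.card_univ, smul_eq_mul, mul_one]
  intro v
  rw [verts_eq, hg v, Multiset.map_map]
  rfl

theorem ncard_leaves_eq_tips_code (P : ParentTree V) (hV : 2 ≤ Fintype.card V) :
    P.leaves.ncard = tips P.code := by
  classical
  obtain ⟨g, hg⟩ := P.exists_isCoding
  have hzero : ∀ v, g v = 0 ↔ P.children v = ∅ := fun v => by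
    rw [← kids_eq_zero_iff, hg v, Multiset.map_eq_zero, Finset.val_eq_zero]
  rw [hg.code_eq, P.root_eq_sum_of_local (fun v => tips (g v))
    (fun v => if P.children v = ∅ then 1 else 0), Finset.sum_boole, Nat.cast_id,
    ← Set.ncard_coe_finset]
  · congr 1
    ext v
    simp only [leaves, Set.mem_ofPred_eq, Finset.coe_filter, Finset.mem_univ, true_and]
    rw [Finset.eq_empty_iff_forall_notMem]
    constructor
    · rintro ⟨-, h⟩ w hw
      exact h w (mem_children.mp hw).2
    · intro h
      have hv : v ≠ P.root := by
        rintro rfl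
        have h1 := hg.code_eq
        rw [(hzero P.root).mpr (Finset.eq_empty_iff_forall_notMem.mpr h)] at h1
        have h2 := P.verts_code
        rw [h1, verts_zero] at h2
        omega
      refine ⟨hv, fun w hw => h w (mem_children.mpr ⟨?_, hw⟩)⟩
      rintro rfl
      exact hv (hw.symm.trans P.par_root)
  · intro v
    rw [tips_eq, hg v, Multiset.map_map]
    by_cases hv : P.children v = ∅
    · simp [hv, (hzero v).mpr hv]
    · rw [if_neg (mt (hzero v).mp hv), if_neg hv, zero_add]
      rfl

end ParentTree

namespace ParentTree

open TreeCode

variable {V W : Type}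

open scoped Classical in
/-- Attach the root of `P` as a new child of the root of `Q`. -/
noncomputable def join (P : ParentTree V) (Q : ParentTree W) : ParentTree (V ⊕ W) where
  root := Sum.inr Q.root
  par := Sum.elim (fun v => if v = P.root then Sum.inr Q.root else Sum.inl (P.par v))
    fun w => Sum.inr (Q.par w)
  depth := Sum.elim (fun v => P.depth v + Q.depth Q.root + 1) Q.depth
  par_root := by simp [Q.par_root]
  depth_par := by
    rintro (v | w) h
    · by_cases hv : v = P.root
      · simp only [Sum.elim_inl, hv, if_true, Sum.elim_inr]
        omega
      · have := P.depth_par v hv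
        simp only [Sum.elim_inl, hv, if_false]
        omega
    · exact Q.depth_par w fun hw => h (congrArg Sum.inr hw)

theorem code_join [Fintype V] [Fintype W] (P : ParentTree V) (Q : ParentTree W) :
    (P.join Q).code = node (P.code ::ₘ kids Q.code) := by
  classical
  obtain ⟨g, hg⟩ := P.exists_isCoding
  obtain ⟨g', hg'⟩ := Q.exists_isCoding
  rw [hg.code_eq, hg'.code_eq]
  set c := node (g P.root ::ₘ kids (g' Q.root)) with hc
  have hval : ∀ v, Multiset.map (Sum.elim g (Function.update g' Q.root c))
      ((Q.children v).map Function.Embedding.inr : Finset (V ⊕ W)).val = kids (g' v) := by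
    intro v
    rw [hg' v, Finset.map_val, Multiset.map_map]
    refine Multiset.map_congr rfl fun w hw => ?_
    exact Function.update_of_ne (mem_children.mp (Finset.mem_def.mpr hw)).1 c g'
  have hcod : (P.join Q).IsCoding (Sum.elim g (Function.update g' Q.root c)) := by
    rintro (v | w)
    · have : (P.join Q).children (Sum.inl v) =
          (P.children v).map (Function.Embedding.inl : V ↪ V ⊕ W) := by
        ext (u | u)
        · by_cases hu : u = P.root <;> simp [mem_children, join, hu]
        · simp [mem_children, join]
      rw [this, Sum.elim_inl, hg v, Finset.map_val, Multiset.map_map]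
      rfl
    · by_cases hw : w = Q.root
      · have : (P.join Q).children (Sum.inr w) = Finset.cons (Sum.inl P.root)
            ((Q.children w).map (Function.Embedding.inr : W ↪ V ⊕ W)) (by simp) := by
          ext (u | u)
          · by_cases hu : u = P.root <;> simp [mem_children, join, hu, hw]
          · simp [mem_children, join]
        rw [this, Finset.cons_val, Multiset.map_cons, hval, hw, Sum.elim_inr,
          Function.update_self, hc, kids_node, Sum.elim_inl]
      · have : (P.join Q).children (Sum.inr w) =
            (Q.children w).map (Function.Embedding.inr : W ↪ V ⊕ W) := by
          ext (u | u)
          · by_cases hu : u = P.root <;> simp [mem_children, join, hu, Ne.symm hw]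
          · simp [mem_children, join]
        rw [this, hval, Sum.elim_inr, Function.update_of_ne hw]
  rw [hcod.code_eq]
  simp [join]

theorem exists_code_eq (c : ℕ) : ∃ (V : Type) (_ : Fintype V) (P : ParentTree V), P.code = c := by
  induction c using Nat.strong_induction_on with
  | _ c ih =>
    rw [← node_kids c]
    have hk : ∀ k ∈ kids c, ∃ (V : Type) (_ : Fintype V) (P : ParentTree V), P.code = k :=
      fun k hk => ih k (lt_of_mem_kids hk)
    generalize kids c = M at hk ⊢
    induction M using Multiset.induction with
    | empty =>
      refine ⟨Unit, inferInstance, ⟨(), id, fun _ => 0, rfl, fun v hv => absurd rfl hv⟩, ?_⟩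
      have : node 0 = 0 := by rw [← kids_zero, node_kids]
      rw [this]
      refine IsCoding.code_eq (g := fun _ => 0) fun v => ?_
      rw [kids_zero, eq_comm, Multiset.map_eq_zero, Finset.val_eq_zero,
        Finset.eq_empty_iff_forall_notMem]
      exact fun w hw => (mem_children.mp hw).1 rfl
    | cons k M ihM =>
      obtain ⟨V, _, P, rfl⟩ := hk k (Multiset.mem_cons_self k M)
      obtain ⟨W, _, Q, hQ⟩ := ihM fun l hl => hk l (Multiset.mem_cons_of_mem hl)
      exact ⟨V ⊕ W, inferInstance, P.join Q, by rw [code_join, hQ, kids_node]⟩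

/-- Relabel the vertices of a rooted tree. -/
def relabel (P : ParentTree V) (e : V ≃ W) : ParentTree W where
  root := e P.root
  par w := e (P.par (e.symm w))
  depth w := P.depth (e.symm w)
  par_root := by simp [P.par_root]
  depth_par w hw := by
    rw [e.symm_apply_apply]
    exact P.depth_par _ fun h => hw (by rw [← h, e.apply_symm_apply])

theorem isom_relabel (P : ParentTree V) (e : V ≃ W) : P.Isom (P.relabel e) :=
  ⟨e, rfl, fun v => by simp [relabel]⟩

theorem exists_code_eq_of_verts_eq {c n : ℕ} (hc : verts c = n) :
    ∃ P : ParentTree (Fin n), P.code = c := by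
  obtain ⟨V, _, P, rfl⟩ := exists_code_eq c
  rw [verts_code] at hc
  exact ⟨P.relabel (Fintype.equivFinOfCardEq hc), ((P.isom_relabel _).code_eq).symm⟩

end ParentTree

namespace TreeCode

/-- Summing a multiplicative weight over all trees whose principal subtrees belong to `X` and have
multiplicity less than `J`. -/
theorem exists_sum_prod_kids_eq (w : ℕ → ℝ) (X : Finset ℕ) (J : ℕ) : ∃ F : Finset ℕ,
    (∀ c, (∀ k ∈ kids c, k ∈ X) → (∀ k, (kids c).count k < J) → c ∈ F) ∧
    ∑ c ∈ F, ((kids c).map w).prod = ∏ x ∈ X, ∑ j ∈ Finset.range J, w x ^ j := by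
  classical
  let M : (X → ℕ) → Multiset ℕ := fun p => ∑ i : X, p i • ({i.1} : Multiset ℕ)
  have hcount : ∀ (p : X → ℕ) (x : X), (M p).count x.1 = p x := by
    intro p x
    simp only [M, Multiset.count_sum', Multiset.count_nsmul, Multiset.count_singleton]
    rw [Finset.sum_eq_single x]
    · simp
    · intro y _ hy
      rw [if_neg fun h => hy (Subtype.ext h.symm), mul_zero]
    · intro h
      exact absurd (Finset.mem_univ x) h
  have hcount' : ∀ (p : X → ℕ) x, x ∉ X → (M p).count x = 0 := by
    intro p x hx
    simp only [M, Multiset.count_sum', Multiset.count_nsmul, Multiset.count_singleton]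
    refine Finset.sum_eq_zero fun y _ => ?_
    rw [if_neg fun h : x = y.1 => hx (h ▸ y.2), mul_zero]
  have hprod : ∀ p : X → ℕ, ((M p).map w).prod = ∏ i : X, w i ^ p i := by
    intro p
    have : (M p).map w = ∑ i : X, p i • ({w i.1} : Multiset ℝ) := by
      rw [← Multiset.coe_mapAddMonoidHom, map_sum]
      simp [Multiset.map_nsmul]
    rw [this, Multiset.prod_sum]
    simp [Multiset.prod_nsmul]
  have hinj : Function.Injective M := fun p q h => funext fun x => by
    rw [← hcount p x, h, hcount q x]
  refine ⟨(Fintype.piFinset fun _ : X => Finset.range J).image fun p => node (M p), ?_, ?_⟩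
  · intro c h1 h2
    refine Finset.mem_image.mpr ⟨fun x => (kids c).count x.1, ?_, ?_⟩
    · simpa [Fintype.mem_piFinset] using fun x _ => h2 x
    · rw [← node_kids c]
      congr 1
      ext x
      by_cases hx : x ∈ X
      · rw [hcount _ ⟨x, hx⟩, kids_node]
      · rw [hcount' _ x hx, eq_comm, Multiset.count_eq_zero]
        exact fun h => hx (h1 x h)
  · rw [Finset.sum_image fun p _ q _ h => hinj (node_injective h)]
    simp only [kids_node, hprod]
    rw [← Finset.prod_univ_sum (fun _ : X => Finset.range J) fun i j => w i ^ j]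
    exact Finset.prod_coe_sort X fun x => ∑ j ∈ Finset.range J, w x ^ j

theorem prod_map_nonneg {w : ℕ → ℝ} (hw : ∀ x, 0 ≤ w x) (M : Multiset ℕ) :
    0 ≤ (M.map w).prod := by
  refine Multiset.prod_nonneg fun a ha => ?_
  obtain ⟨x, -, rfl⟩ := Multiset.mem_map.mp ha
  exact hw x

theorem sum_prod_kids_le {w : ℕ → ℝ} (hw : ∀ x, 0 ≤ w x) (hw1 : ∀ x, w x < 1) (N : ℕ) :
    ∑ c ∈ Finset.range (N + 1), ((kids c).map w).prod ≤ ∏ x ∈ Finset.range N, (1 - w x)⁻¹ := by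
  obtain ⟨F, hF, hsum⟩ := exists_sum_prod_kids_eq w (Finset.range N)
    ((Finset.range (N + 1)).sup (fun c => (kids c).card) + 1)
  calc _ ≤ ∑ c ∈ F, ((kids c).map w).prod := by
        refine Finset.sum_le_sum_of_subset_of_nonneg (fun c hc => ?_)
          fun c _ _ => prod_map_nonneg hw _
        refine hF c (fun k hk => ?_) fun k => ?_
        · have := lt_of_mem_kids hk
          have := Finset.mem_range.mp hc
          exact Finset.mem_range.mpr (by omega)
        · exact Nat.lt_succ_of_le ((Multiset.count_le_card _ _).trans
            (Finset.le_sup (f := fun c => (kids c).card) hc))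
    _ ≤ _ := by
        rw [hsum]
        refine Finset.prod_le_prod (fun x _ => Finset.sum_nonneg fun j _ => pow_nonneg (hw x) j)
          fun x _ => ?_
        rw [← tsum_geometric_of_lt_one (hw x) (hw1 x)]
        exact (summable_geometric_of_lt_one (hw x) (hw1 x)).sum_le_tsum _
          fun j _ => pow_nonneg (hw x) j

theorem prod_inv_le_tsum {w : ℕ → ℝ} (hw : ∀ x, 0 ≤ w x) (hw1 : ∀ x, w x < 1)
    (hs : Summable fun c => ((kids c).map w).prod) (X : Finset ℕ) :
    ∏ x ∈ X, (1 - w x)⁻¹ ≤ ∑' c, ((kids c).map w).prod := by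
  have hlim : Filter.Tendsto (fun J => ∏ x ∈ X, ∑ j ∈ Finset.range J, w x ^ j) Filter.atTop
      (nhds (∏ x ∈ X, (1 - w x)⁻¹)) :=
    tendsto_finsetProd _ fun x _ => (hasSum_geometric_of_lt_one (hw x) (hw1 x)).tendsto_sum_nat
  refine le_of_tendsto' hlim fun J => ?_
  obtain ⟨F, -, hsum⟩ := exists_sum_prod_kids_eq w X J
  rw [← hsum]
  exact hs.sum_le_tsum _ fun c _ => prod_map_nonneg hw _

/-- The weight marking vertices by `z` and childless vertices by `u`. -/
noncomputable def weight (z u : ℝ) (c : ℕ) : ℝ := z ^ verts c * u ^ tips c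

theorem prod_map_pow_eq (z : ℝ) (f : ℕ → ℕ) (M : Multiset ℕ) :
    (M.map fun k => z ^ f k).prod = z ^ (M.map f).sum := by
  induction M using Multiset.induction with
  | empty => simp
  | cons a M ih => simp [ih, pow_add]

theorem prod_weight (z u : ℝ) (M : Multiset ℕ) :
    (M.map (weight z u)).prod = z ^ (M.map verts).sum * u ^ (M.map tips).sum := by
  rw [← prod_map_pow_eq, ← prod_map_pow_eq, ← Multiset.prod_map_mul]
  rfl

theorem weight_eq_mul_prod (z u : ℝ) {c : ℕ} (hc : c ≠ 0) :
    weight z u c = z * ((kids c).map (weight z u)).prod := by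
  rw [prod_weight, weight, verts_eq, tips_eq, if_neg hc, pow_add, pow_one, mul_assoc]

theorem weight_zero (z u : ℝ) : weight z u 0 = z * u := by
  rw [weight, verts_zero, tips_zero, pow_one, pow_one]

theorem weight_one (z u : ℝ) : weight z u 1 = z ^ 2 * u := by
  rw [weight, verts_one, tips_one, pow_one]

section Bounds

variable {z u : ℝ}

theorem weight_nonneg (hz : 0 ≤ z) (hu : 0 ≤ u) (c : ℕ) : 0 ≤ weight z u c :=
  mul_nonneg (pow_nonneg hz _) (pow_nonneg hu _)

theorem weight_lt_one (hz : 0 ≤ z) (hz1 : z < 1) (hu : 0 ≤ u) (hu1 : u ≤ 1) (c : ℕ) :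
    weight z u c < 1 :=
  lt_of_le_of_lt (mul_le_of_le_one_right (pow_nonneg hz _) (pow_le_one₀ hu hu1))
    (pow_lt_one₀ hz hz1 (by have := verts_pos c; omega))

theorem weight_le (hz : 0 ≤ z) (hz1 : z ≤ 1) (hu : 0 ≤ u) (hu1 : u ≤ 1) {c : ℕ} (h0 : c ≠ 0)
    (h1 : c ≠ 1) : weight z u c ≤ z ^ 3 * u := by
  refine mul_le_mul (pow_le_pow_of_le_one hz hz1 (three_le_verts h0 h1)) ?_ (pow_nonneg hu _)
    (pow_nonneg hz _)
  simpa using pow_le_pow_of_le_one hu hu1 (tips_pos c)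

end Bounds

theorem inv_one_sub_le_exp {x q : ℝ} (hx : 0 ≤ x) (hxq : x ≤ q) (hq : q < 1) :
    (1 - x)⁻¹ ≤ Real.exp ((1 - q)⁻¹ * x) := by
  have h1 : 0 < 1 - q := by linarith
  have h2 : (1 - x)⁻¹ = 1 + (1 - x)⁻¹ * x := by
    have : 1 - x ≠ 0 := by linarith
    field_simp
    ring
  have h3 : (1 - x)⁻¹ * x ≤ (1 - q)⁻¹ * x :=
    mul_le_mul_of_nonneg_right (inv_anti₀ h1 (by linarith)) hx
  linarith [Real.add_one_le_exp ((1 - q)⁻¹ * x)]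

theorem exp_le_inv_one_sub {x : ℝ} (hx : x < 1) : Real.exp x ≤ (1 - x)⁻¹ := by
  rw [← neg_neg x, Real.exp_neg, neg_neg]
  exact inv_anti₀ (by linarith) (by linarith [Real.add_one_le_exp (-x)])

theorem sum_weight_le (N : ℕ) :
    ∑ c ∈ Finset.range N, weight (429 / 1000) (64 / 125) c ≤ 3 / 4 := by
  set w := weight (429 / 1000) (64 / 125) with hwdef
  have hw : ∀ c, 0 ≤ w c := weight_nonneg (by norm_num) (by norm_num)
  have hw1 : ∀ c, w c < 1 := weight_lt_one (by norm_num) (by norm_num) (by norm_num) (by norm_num)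
  have h0 : w 0 = 429 / 1000 * (64 / 125) := weight_zero _ _
  have h1 : w 1 = (429 / 1000) ^ 2 * (64 / 125) := weight_one _ _
  suffices h : ∀ M, ∑ c ∈ Finset.range (M + 2), w c ≤ 3 / 4 from
    (Finset.sum_le_sum_of_subset_of_nonneg (Finset.range_mono (by omega)) fun c _ _ => hw c).trans
      (h N)
  intro M
  induction M with
  | zero =>
    rw [Finset.sum_range_succ, Finset.sum_range_one, h0, h1]
    norm_num
  | succ M ih =>
    have hrec : ∑ c ∈ Finset.range (M + 1 + 2), w c = 429 / 1000 *
        ∑ c ∈ Finset.range (M + 2 + 1), ((kids c).map w).prod +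
          (429 / 1000 * (64 / 125) - 429 / 1000) := by
      rw [show M + 1 + 2 = M + 2 + 1 by omega, Finset.sum_range_succ' w,
        Finset.sum_range_succ' (fun c => ((kids c).map w).prod), h0, kids_zero, mul_add, Finset.mul_sum, Multiset.map_zero, Multiset.prod_zero]
      rw [Finset.sum_congr rfl fun c _ => weight_eq_mul_prod _ _ (Nat.succ_ne_zero c)]
      ring
    have hprod := sum_prod_kids_le hw hw1 (M + 2)
    rw [Finset.prod_range_succ', Finset.prod_range_succ'] at hprod
    rw [Finset.sum_range_succ', Finset.sum_range_succ'] at ih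
    set q : ℝ := (429 / 1000) ^ 3 * (64 / 125) with hq
    have hexp : ∏ c ∈ Finset.range M, (1 - w (c + 1 + 1))⁻¹ ≤
        Real.exp ((1 - q)⁻¹ * ∑ c ∈ Finset.range M, w (c + 1 + 1)) := by
      rw [Finset.mul_sum, Real.exp_sum]
      refine Finset.prod_le_prod (fun c _ => inv_nonneg.mpr (by linarith [hw1 (c + 1 + 1)]))
        fun c _ => inv_one_sub_le_exp (hw _) ?_ (by rw [hq]; norm_num)
      exact weight_le (by norm_num) (by norm_num) (by norm_num) (by norm_num) (by omega) (by omega)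
    have hexp' : Real.exp ((1 - q)⁻¹ * ∑ c ∈ Finset.range M, w (c + 1 + 1)) ≤ 1576 / 1000 := by
      have hle : (1 - q)⁻¹ * ∑ c ∈ Finset.range M, w (c + 1 + 1) ≤ 4546 / 10000 := by
        have hs : ∑ c ∈ Finset.range M, w (c + 1 + 1) ≤ 3 / 4 - w 1 - w 0 := by
          rw [zero_add] at ih
          linarith
        refine (mul_le_mul_of_nonneg_left hs (by rw [hq]; norm_num)).trans ?_
        rw [h0, h1, hq]
        norm_num
      refine (Real.exp_le_exp.mpr hle).trans
        ((Real.exp_bound' (n := 6) (by norm_num) (by norm_num) (by norm_num)).trans ?_)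
      norm_num [Finset.sum_range_succ, Nat.factorial]
    have hfin : ∑ c ∈ Finset.range (M + 2 + 1), ((kids c).map w).prod ≤
        1576 / 1000 * (1 - w 1)⁻¹ * (1 - w 0)⁻¹ := by
      refine hprod.trans ?_
      rw [zero_add]
      exact mul_le_mul_of_nonneg_right (mul_le_mul_of_nonneg_right (hexp.trans hexp')
        (inv_nonneg.mpr (by linarith [hw1 1]))) (inv_nonneg.mpr (by linarith [hw1 0]))
    rw [hrec]
    rw [h0, h1] at hfin
    norm_num at hfin ⊢
    linarith

/-- Few trees have fewer than a third of their vertices childless. -/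
theorem card_few_tips_mul_le {n : ℕ} (F : Finset ℕ) (hv : ∀ c ∈ F, verts c = n)
    (ht : ∀ c ∈ F, 3 * tips c ≤ n) : (F.card : ℝ) * (429 / 1250) ^ n ≤ 1 := by
  have h1 : (F.card : ℝ) * (429 / 1250) ^ n ≤ ∑ c ∈ F, weight (429 / 1000) (64 / 125) c := by
    rw [← nsmul_eq_mul]
    refine Finset.card_nsmul_le_sum _ _ _ fun c hc => ?_
    rw [weight, hv c hc, show (429 / 1250 : ℝ) = 429 / 1000 * (4 / 5) by norm_num, mul_pow,
      show (64 / 125 : ℝ) = (4 / 5) ^ 3 by norm_num, ← pow_mul]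
    exact mul_le_mul_of_nonneg_left
      (pow_le_pow_of_le_one (by norm_num) (by norm_num) (ht c hc)) (by positivity)
  have h2 : ∑ c ∈ F, weight (429 / 1000) (64 / 125) c ≤ 3 / 4 :=
    (Finset.sum_le_sum_of_subset_of_nonneg (fun c hc => Finset.mem_range.mpr
      (Nat.lt_succ_of_le (Finset.le_sup (f := id) hc)))
      fun c _ _ => weight_nonneg (by norm_num) (by norm_num) c).trans
      (sum_weight_le (F.sup id + 1))
  linarith

end TreeCode

open TreeCode

instance (n : ℕ) : Finite (UnlabelledTree n) :=
  have : Finite (TreeOn n) := Subtype.finite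
  Quotient.finite _

/-- The isomorphism class of the graph underlying a rooted tree. -/
def ParentTree.unlabelled {n : ℕ} (P : ParentTree (Fin (n + 1))) : UnlabelledTree n :=
  Quotient.mk (treeSetoid n) ⟨P.graph, P.graph_isTree⟩

theorem UnlabelledTree.exists_parentTree {n : ℕ} (q : UnlabelledTree n) :
    ∃ P : ParentTree (Fin (n + 1)), P.unlabelled = q := by
  induction q using Quotient.inductionOn with
  | _ T =>
    obtain ⟨P, hP⟩ := ParentTree.exists_graph_eq T.2
    exact ⟨P, congrArg (Quotient.mk (treeSetoid n)) (Subtype.ext hP)⟩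

theorem ParentTree.unlabelled_eq_of_code_eq {n : ℕ} {P Q : ParentTree (Fin (n + 1))}
    (h : P.code = Q.code) : P.unlabelled = Q.unlabelled :=
  Quotient.sound (s := treeSetoid n) (ParentTree.isom_of_code_eq h).graph_iso

/-- A code is determined by the underlying unrooted tree and the position of the root in a fixed
representative of it. -/
theorem exists_injective_code (n : ℕ) :
    ∃ f : {c // verts c = n + 1} → UnlabelledTree n × Fin (n + 1), Function.Injective f := by
  have hP : ∀ c : {c // verts c = n + 1}, ∃ P : ParentTree (Fin (n + 1)), P.code = c.1 :=
    fun c => ParentTree.exists_code_eq_of_verts_eq c.2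
  choose P hP using hP
  have he : ∀ c, Nonempty ((P c).graph ≃g ((P c).unlabelled.out : TreeOn n).val) := fun c =>
    Quotient.exact (s := treeSetoid n) (Quotient.out_eq (P c).unlabelled).symm
  refine ⟨fun c => ((P c).unlabelled, (he c).some (P c).root), fun c d h => ?_⟩
  obtain ⟨h1, h2⟩ := Prod.mk.inj h
  have key : ∀ (q : UnlabelledTree n) (e : (P c).graph ≃g (q.out : TreeOn n).val)
      (e' : (P d).graph ≃g (q.out : TreeOn n).val), e (P c).root = e' (P d).root →
      (P c).Isom (P d) := fun q e e' hee =>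
    ParentTree.isom_of_graph_iso (e.trans e'.symm) (by simp [hee])
  have hiso : (P c).Isom (P d) := by
    generalize (he c).some = e at h2
    generalize (he d).some = e' at h2
    revert e e'
    rw [h1]
    exact fun e e' => key _ e e'
  exact Subtype.ext (by rw [← hP c, ← hP d, hiso.code_eq])

namespace TreeCode

theorem finite_verts_eq (n : ℕ) : Finite {c // verts c = n} := by
  cases n with
  | zero =>
    have : IsEmpty {c // verts c = 0} := ⟨fun c => by
      have := verts_pos c.1
      have := c.2
      omega⟩
    infer_instance
  | succ n =>
    obtain ⟨f, hf⟩ := exists_injective_code n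
    exact Finite.of_injective f hf

/-- The number of rooted trees with `n` vertices. -/
noncomputable def numRooted (n : ℕ) : ℕ := Nat.card {c // verts c = n}

theorem numRooted_succ_le (n : ℕ) :
    numRooted (n + 1) ≤ Nat.card (UnlabelledTree n) * (n + 1) := by
  obtain ⟨f, hf⟩ := exists_injective_code n
  have := Nat.card_le_card_of_injective f hf
  rwa [Nat.card_prod, Nat.card_fin] at this

theorem numRooted_pos {n : ℕ} (hn : 1 ≤ n) : 1 ≤ numRooted n := by
  have : Nonempty {c // verts c = n} := by
    induction n, hn using Nat.le_induction with
    | base => exact ⟨⟨0, verts_zero⟩⟩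
    | succ n _ ih =>
      obtain ⟨c, hc⟩ := ih
      refine ⟨⟨node {c}, ?_⟩⟩
      rw [verts_eq, kids_node, Multiset.map_singleton, Multiset.sum_singleton, hc, add_comm]
  have := finite_verts_eq n
  exact Nat.card_pos

theorem numRooted_mul_le {N n : ℕ} (h : n ≠ N) :
    numRooted N * numRooted n ≤ numRooted (n + (N + 1)) := by
  have := finite_verts_eq (n + (N + 1))
  rw [numRooted, numRooted, ← Nat.card_prod]
  refine Nat.card_le_card_of_injective (fun p => ⟨node {p.1.1, p.2.1}, ?_⟩) ?_
  · have h1 := p.1.2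
    have h2 := p.2.2
    rw [verts_eq, kids_node]
    simp only [Multiset.insert_eq_cons, Multiset.map_cons, Multiset.map_singleton,
      Multiset.sum_cons, Multiset.sum_singleton]
    omega
  · rintro ⟨⟨a, ha⟩, ⟨b, hb⟩⟩ ⟨⟨a', ha'⟩, ⟨b', hb'⟩⟩ he
    have he' : ({a, b} : Multiset ℕ) = {a', b'} := node_injective (congrArg Subtype.val he)
    have hmem : a ∈ ({a', b'} : Multiset ℕ) := by
      rw [← he']
      simp
    have haa : a = a' := by
      rcases Multiset.mem_cons.mp hmem with h1 | h1
      · exact h1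
      · have h2 := Multiset.mem_singleton.mp h1
        subst h2
        exact absurd (hb'.symm.trans ha) h
    subst haa
    have hbb : b = b' := by
      simpa using he'
    subst hbb
    rfl

theorem summable_of_numRooted_lt {β z : ℝ} (hz : 0 < z) (hβ : 0 < β) (hzβ : z * β < 1)
    (h : ∀ n, (numRooted n : ℝ) ≤ β ^ (n + 1)) : Summable fun c => z ^ verts c := by
  refine summable_of_sum_range_le (c := β * (1 - z * β)⁻¹) (fun c => (pow_pos hz _).le)
    fun N => ?_
  have h1 : ∑ c ∈ Finset.range N, z ^ verts c =
      ∑ n ∈ Finset.range ((Finset.range N).sup verts + 1),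
        ∑ c ∈ (Finset.range N).filter fun c => verts c = n, z ^ verts c :=
    (Finset.sum_fiberwise_of_maps_to (fun c hc => Finset.mem_range.mpr
      (Nat.lt_succ_of_le (Finset.le_sup hc))) _).symm
  rw [h1]
  have hpos : 0 ≤ z * β := by positivity
  calc _ ≤ ∑ n ∈ Finset.range ((Finset.range N).sup verts + 1), β * (z * β) ^ n := by
        refine Finset.sum_le_sum fun n _ => ?_
        rw [Finset.sum_congr rfl fun c hc => by rw [(Finset.mem_filter.mp hc).2],
          Finset.sum_const, nsmul_eq_mul]
        have hcard : (((Finset.range N).filter fun c => verts c = n).card : ℝ) ≤ β ^ (n + 1) := by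
          refine le_trans ?_ (h n)
          have := finite_verts_eq n
          rw [Nat.cast_le, numRooted, ← Nat.card_eq_finsetCard]
          exact Nat.card_le_card_of_injective
            (fun c => ⟨c.1, (Finset.mem_filter.mp c.2).2⟩)
            fun a b hab => Subtype.ext (Subtype.mk.inj hab)
        calc _ ≤ β ^ (n + 1) * z ^ n := mul_le_mul_of_nonneg_right hcard (by positivity)
          _ = β * (z * β) ^ n := by ring
    _ = β * ∑ n ∈ Finset.range ((Finset.range N).sup verts + 1), (z * β) ^ n := by
        rw [Finset.mul_sum]
    _ ≤ β * (1 - z * β)⁻¹ := by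
        refine mul_le_mul_of_nonneg_left ?_ hβ.le
        rw [← tsum_geometric_of_lt_one hpos hzβ]
        exact (summable_geometric_of_lt_one hpos hzβ).sum_le_tsum _ fun j _ => pow_nonneg hpos j

theorem not_summable_pow_verts : ¬ Summable fun c => (679 / 2000 : ℝ) ^ verts c := by
  intro hs
  have hweq : weight (679 / 2000) 1 = fun c => (679 / 2000 : ℝ) ^ verts c := by
    funext c
    rw [weight, one_pow, mul_one]
  rw [← hweq] at hs
  set w := weight (679 / 2000) 1 with hwdef
  have hw : ∀ c, 0 ≤ w c := weight_nonneg (by norm_num) (by norm_num)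
  have hw1 : ∀ c, w c < 1 := weight_lt_one (by norm_num) (by norm_num) (by norm_num) (by norm_num)
  have h0 : w 0 = 679 / 2000 * 1 := weight_zero _ _
  have h1 : w 1 = (679 / 2000) ^ 2 * 1 := weight_one _ _
  have hrec : ∀ c, ((kids c).map w).prod = 2000 / 679 * w c := by
    intro c
    by_cases hc : c = 0
    · rw [hc, h0, kids_zero, Multiset.map_zero, Multiset.prod_zero]
      norm_num
    · rw [hwdef, weight_eq_mul_prod _ _ hc]
      ring
  set T := ∑' c, w c with hT
  have hTpos : 0 < T := lt_of_lt_of_le (by rw [h0]; norm_num) (hs.le_tsum 0 fun c _ => hw c)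
  have hs' : Summable fun c => ((kids c).map w).prod := by
    simp only [hrec]
    exact hs.mul_left _
  have hbound : ∀ M, Real.exp (∑ c ∈ Finset.range (M + 2), w c - w 0 - w 1) *
      ((1 - w 1)⁻¹ * (1 - w 0)⁻¹) ≤ 2000 / 679 * T := by
    intro M
    have h2 := prod_inv_le_tsum hw hw1 hs' (Finset.range (M + 2))
    simp only [hrec, tsum_mul_left] at h2
    refine le_trans ?_ h2
    rw [Finset.prod_range_succ', Finset.prod_range_succ', Finset.sum_range_succ',
      Finset.sum_range_succ', mul_assoc, zero_add, add_sub_cancel_right, add_sub_cancel_right,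
      Real.exp_sum]
    refine mul_le_mul_of_nonneg_right (Finset.prod_le_prod (fun c _ => (Real.exp_pos _).le)
      fun c _ => exp_le_inv_one_sub (hw1 _)) ?_
    exact mul_nonneg (inv_nonneg.mpr (by linarith [hw1 1])) (inv_nonneg.mpr (by linarith [hw1 0]))
  have hlim : Real.exp (T - w 0 - w 1) * ((1 - w 1)⁻¹ * (1 - w 0)⁻¹) ≤ 2000 / 679 * T := by
    have ht := (hs.hasSum.tendsto_sum_nat).comp (Filter.tendsto_add_atTop_nat 2)
    have hexp : Filter.Tendsto (fun M => Real.exp (∑ c ∈ Finset.range (M + 2), w c - w 0 - w 1) *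
        ((1 - w 1)⁻¹ * (1 - w 0)⁻¹)) Filter.atTop
        (nhds (Real.exp (T - w 0 - w 1) * ((1 - w 1)⁻¹ * (1 - w 0)⁻¹))) :=
      ((Real.continuous_exp.tendsto _).comp
        ((ht.sub_const (w 0)).sub_const (w 1))).mul_const _
    exact le_of_tendsto' hexp hbound
  have hsplit : T - w 0 - w 1 = (T - 1) + (1 - w 0 - w 1) := by ring
  rw [hsplit, Real.exp_add] at hlim
  have he1 : T ≤ Real.exp (T - 1) := by linarith [Real.add_one_le_exp (T - 1)]
  have he2 : (1724 / 1000 : ℝ) ≤ Real.exp (1 - w 0 - w 1) := by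
    rw [h0, h1]
    refine le_trans ?_ (Real.sum_le_exp_of_nonneg (by norm_num) 6)
    norm_num [Finset.sum_range_succ, Nat.factorial]
  have h3 : T * (1724 / 1000) * ((1 - w 1)⁻¹ * (1 - w 0)⁻¹) ≤ 2000 / 679 * T := by
    refine le_trans (mul_le_mul_of_nonneg_right (mul_le_mul he1 he2 (by norm_num)
      (Real.exp_pos _).le) ?_) hlim
    exact mul_nonneg (inv_nonneg.mpr (by linarith [hw1 1])) (inv_nonneg.mpr (by linarith [hw1 0]))
  rw [h0, h1] at h3
  norm_num at h3
  linarith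

theorem exists_numRooted_ge : ∃ N, (147 / 50 : ℝ) ^ (N + 1) ≤ numRooted N := by
  by_contra! h
  exact not_summable_pow_verts
    (summable_of_numRooted_lt (β := 147 / 50) (by norm_num) (by norm_num) (by norm_num)
      fun n => (h n).le)

/-- Exponential lower bound for the number of rooted trees. -/
theorem exists_mul_pow_le_numRooted :
    ∃ a : ℝ, 0 < a ∧ ∀ᶠ n in Filter.atTop, a * (147 / 50) ^ n ≤ numRooted n := by
  obtain ⟨N, hN⟩ := exists_numRooted_ge
  refine ⟨((147 / 50 : ℝ) ^ (2 * N + 1))⁻¹, by positivity, ?_⟩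
  filter_upwards [Filter.eventually_gt_atTop N] with n hn
  induction n using Nat.strong_induction_on with
  | _ n ih =>
    by_cases hs : n ≤ 2 * N + 1
    · have h1 : (1 : ℝ) ≤ numRooted n := by exact_mod_cast numRooted_pos (by omega)
      refine le_trans ?_ h1
      rw [inv_mul_le_iff₀ (by positivity), mul_one]
      exact pow_le_pow_right₀ (by norm_num) hs
    · obtain ⟨k, rfl⟩ : ∃ k, n = k + (N + 1) := ⟨n - (N + 1), by omega⟩
      have h1 := ih k (by omega) (by omega)
      have h2 : ((numRooted N * numRooted k : ℕ) : ℝ) ≤ numRooted (k + (N + 1)) := by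
        exact_mod_cast numRooted_mul_le (by omega)
      push_cast at h2
      refine le_trans ?_ h2
      rw [pow_add _ k, mul_comm, mul_comm ((147 / 50 : ℝ) ^ k), mul_assoc,
        mul_comm ((147 / 50 : ℝ) ^ k)]
      exact mul_le_mul hN h1 (by positivity) (by positivity)

end TreeCode

/-- Few isomorphism classes fail a property shared by all trees in which at least a third of the
vertices are leaves. -/
theorem UnlabelledTree.card_not_mul_le {n : ℕ} (hn : 1 ≤ n) {p : UnlabelledTree n → Prop}
    (hp : ∀ P : ParentTree (Fin (n + 1)), n + 1 ≤ 3 * P.leaves.ncard → p P.unlabelled) :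
    (Nat.card {q // ¬ p q} : ℝ) * (429 / 1250) ^ (n + 1) ≤ 1 := by
  classical
  choose P hP using UnlabelledTree.exists_parentTree (n := n)
  have : Fintype {q // ¬ p q} := Fintype.ofFinite _
  have hinj : Function.Injective fun q : {q // ¬ p q} => (P q.1).code := fun q r h =>
    Subtype.ext (by rw [← hP q.1, ← hP r.1, ParentTree.unlabelled_eq_of_code_eq h])
  have hcard := card_few_tips_mul_le (n := n + 1)
    (Finset.univ.image fun q : {q // ¬ p q} => (P q.1).code) ?_ ?_
  · rwa [Finset.card_image_of_injective _ hinj, Finset.card_univ,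
      ← Nat.card_eq_fintype_card] at hcard
  · simp only [Finset.mem_image, Finset.mem_univ, true_and]
    rintro _ ⟨q, rfl⟩
    rw [ParentTree.verts_code, Fintype.card_fin]
  · simp only [Finset.mem_image, Finset.mem_univ, true_and]
    rintro _ ⟨q, rfl⟩
    rw [← ParentTree.ncard_leaves_eq_tips_code _ (by rw [Fintype.card_fin]; omega)]
    by_contra! h
    exact q.2 (hP q.1 ▸ hp _ h.le)

theorem UnlabelledTree.one_sub_le_proportion {n : ℕ} (hn : 1 ≤ n) {a : ℝ} (ha : 0 < a)
    (hlow : a * (147 / 50) ^ (n + 1) ≤ numRooted (n + 1)) {p : UnlabelledTree n → Prop}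
    (hp : ∀ P : ParentTree (Fin (n + 1)), n + 1 ≤ 3 * P.leaves.ncard → p P.unlabelled) :
    1 - a⁻¹ * ((n + 1 : ℕ) * (62500 / 63063 : ℝ) ^ (n + 1)) ≤
      (Nat.card {q // p q} : ℝ) / Nat.card (UnlabelledTree n) := by
  have hsum : Nat.card {q // p q} + Nat.card {q // ¬ p q} = Nat.card (UnlabelledTree n) := by
    classical
    rw [← Nat.card_sum]
    exact Nat.card_congr (Equiv.sumCompl p)
  have hsum' : (Nat.card {q // p q} : ℝ) + Nat.card {q // ¬ p q} =
      Nat.card (UnlabelledTree n) := by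
    exact_mod_cast hsum
  have hbad := card_not_mul_le hn hp
  have htot : a * (147 / 50) ^ (n + 1) ≤ Nat.card (UnlabelledTree n) * ((n + 1 : ℕ) : ℝ) :=
    hlow.trans (by exact_mod_cast numRooted_succ_le n)
  have hN : (0 : ℝ) < (n + 1 : ℕ) := by positivity
  have hpos : (0 : ℝ) < Nat.card (UnlabelledTree n) :=
    pos_of_mul_pos_left (lt_of_lt_of_le (by positivity) htot) hN.le
  rw [le_div_iff₀ hpos, ← sub_nonneg]
  have hkey : (Nat.card {q // ¬ p q} : ℝ) ≤
      a⁻¹ * ((n + 1 : ℕ) * (62500 / 63063 : ℝ) ^ (n + 1)) * Nat.card (UnlabelledTree n) := by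
    have hb : (Nat.card {q // ¬ p q} : ℝ) ≤ (1250 / 429) ^ (n + 1) := by
      rw [show (1250 / 429 : ℝ) = (429 / 1250)⁻¹ by norm_num, inv_pow]
      rwa [← one_div, le_div_iff₀ (by positivity)]
    refine hb.trans ?_
    rw [show (1250 / 429 : ℝ) = 62500 / 63063 * (147 / 50) by norm_num, mul_pow]
    calc (62500 / 63063 : ℝ) ^ (n + 1) * (147 / 50) ^ (n + 1)
        = a⁻¹ * (62500 / 63063 : ℝ) ^ (n + 1) * (a * (147 / 50) ^ (n + 1)) := by
          field_simp
      _ ≤ a⁻¹ * (62500 / 63063 : ℝ) ^ (n + 1) *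
          (Nat.card (UnlabelledTree n) * ((n + 1 : ℕ) : ℝ)) :=
          mul_le_mul_of_nonneg_left htot (by positivity)
      _ = _ := by ring
  linarith

/-- As `m → ∞` over integers `m` such that `2m+1` is prime, the proportion of isomorphism
classes of unlabelled trees with `m+1` edges that decompose `K_{6m+5} \ e` (the complete
graph on `6m+5` vertices minus one edge) tends to `1`. -/
theorem random_tree_decomposes_complete_minus_edge :
    Filter.Tendsto
      (fun m : ℕ =>
        ((Nat.card {c : UnlabelledTree (m + 1) //
            ∃ T : TreeOn (m + 1), Quotient.mk (treeSetoid (m + 1)) T = c ∧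
              ∀ a b : Fin (6 * m + 5), a ≠ b →
                Decomposes T.val
                  ((⊤ : SimpleGraph (Fin (6 * m + 5))).deleteEdges {s(a, b)})} : ℝ) /
          (Nat.card (UnlabelledTree (m + 1)) : ℝ)))
      (Filter.atTop ⊓ Filter.principal {m : ℕ | Nat.Prime (2 * m + 1)})
      (nhds 1) := by
  obtain ⟨a, ha, hlow⟩ := exists_mul_pow_le_numRooted
  have hshift : Filter.Tendsto (fun m : ℕ => m + 1 + 1) Filter.atTop Filter.atTop :=
    Filter.tendsto_add_atTop_nat 2
  have hlim : Filter.Tendsto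
      (fun m : ℕ => 1 - a⁻¹ * ((m + 1 + 1 : ℕ) * (62500 / 63063 : ℝ) ^ (m + 1 + 1)))
      Filter.atTop (nhds 1) := by
    have h := (((tendsto_self_mul_const_pow_of_lt_one (r := 62500 / 63063)
      (by norm_num) (by norm_num)).comp hshift).const_mul a⁻¹).const_sub 1
    simpa using h
  refine tendsto_of_tendsto_of_tendsto_of_le_of_le' (hlim.mono_left inf_le_left)
    tendsto_const_nhds ?_ (Filter.Eventually.of_forall fun m => ?_)
  · rw [Filter.eventually_inf_principal]
    filter_upwards [hshift.eventually hlow] with m hm hprime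
    refine UnlabelledTree.one_sub_le_proportion (by omega) ha hm fun P hP => ?_
    exact ⟨⟨P.graph, P.graph_isTree⟩, rfl, fun x y hxy =>
      P.decomposes_complete_minus_edge hprime (by rw [Fintype.card_fin]) hP hxy⟩
  · refine div_le_one_of_le₀ ?_ (Nat.cast_nonneg _)
    exact_mod_cast Finite.card_subtype_le _
end
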